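/- arXiv:2211.14754 — 2 statements merged into one kernel-verified Lean document; each statement's English description precedes it below -/
import Mathlib

section
/- Let A and B be Frobenius algebras over k graded by abelian groups F and G respectively, with comultiplications Δ_A and Δ_B graded maps of degrees d_A ∈ F and d_B ∈ G respectively, and let t : F⊗_ℤ G → k^× be a group homomorphism. Then the twisted tensor product A⊗^t B (with the induced Frobenius-candidate structure) is a Frobenius algebra if and only if t^{⟨|a| | |b|⟩} = t^{⟨|a|+d_A | |b|⟩} and t^{⟨|a| | |b|⟩} = t^{⟨|a| | |b|+d_B⟩} for all homogeneous a ∈ A and b ∈ B. -/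
open scoped TensorProduct

namespace TTP

section Defs

variable (k : Type*) [Field k]

section MidMap

variable {X P Q Y R S : Type*}
  [AddCommGroup X] [Module k X] [AddCommGroup P] [Module k P]
  [AddCommGroup Q] [Module k Q] [AddCommGroup Y] [Module k Y]
  [AddCommGroup R] [Module k R] [AddCommGroup S] [Module k S]

/-- The map `1_X ⊗ f ⊗ 1_Y` (with the canonical reassociations). -/
noncomputable def midMap (f : P ⊗[k] Q →ₗ[k] R ⊗[k] S) :
    (X ⊗[k] P) ⊗[k] (Q ⊗[k] Y) →ₗ[k] (X ⊗[k] R) ⊗[k] (S ⊗[k] Y) :=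
  (TensorProduct.assoc k (X ⊗[k] R) S Y).toLinearMap
    ∘ₗ TensorProduct.map (TensorProduct.assoc k X R S).symm.toLinearMap LinearMap.id
    ∘ₗ TensorProduct.map (TensorProduct.map LinearMap.id f) LinearMap.id
    ∘ₗ TensorProduct.map (TensorProduct.assoc k X P Q).toLinearMap LinearMap.id
    ∘ₗ (TensorProduct.assoc k (X ⊗[k] P) Q Y).symm.toLinearMap

end MidMap

variable {A B : Type*} [AddCommGroup A] [Module k A] [AddCommGroup B] [Module k B]

/-- `(A, mul, unit)` is a unital associative `k`-algebra (diagrammatically). -/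
def IsUnitalAssoc (mul : A ⊗[k] A →ₗ[k] A) (unit : k →ₗ[k] A) : Prop :=
  mul ∘ₗ TensorProduct.map unit LinearMap.id ∘ₗ (TensorProduct.lid k A).symm.toLinearMap
      = LinearMap.id
  ∧ mul ∘ₗ TensorProduct.map LinearMap.id unit ∘ₗ (TensorProduct.rid k A).symm.toLinearMap
      = LinearMap.id
  ∧ mul ∘ₗ TensorProduct.map mul LinearMap.id
      = mul ∘ₗ TensorProduct.map LinearMap.id mul ∘ₗ (TensorProduct.assoc k A A A).toLinearMap

/-- `(A, comul, counit)` is a counital coassociative `k`-coalgebra (diagrammatically). -/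
def IsCounitalCoassoc (comul : A →ₗ[k] A ⊗[k] A) (counit : A →ₗ[k] k) : Prop :=
  (TensorProduct.lid k A).toLinearMap ∘ₗ TensorProduct.map counit LinearMap.id ∘ₗ comul
      = LinearMap.id
  ∧ (TensorProduct.rid k A).toLinearMap ∘ₗ TensorProduct.map LinearMap.id counit ∘ₗ comul
      = LinearMap.id
  ∧ TensorProduct.map comul LinearMap.id ∘ₗ comul
      = (TensorProduct.assoc k A A A).symm.toLinearMap
          ∘ₗ TensorProduct.map LinearMap.id comul ∘ₗ comul

/-- `τ : B ⊗ A → A ⊗ B` is a twisting map for the algebras `A` and `B`: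
it is compatible with both units and with both multiplications. -/
def IsTwisting (mulA : A ⊗[k] A →ₗ[k] A) (unitA : k →ₗ[k] A)
    (mulB : B ⊗[k] B →ₗ[k] B) (unitB : k →ₗ[k] B)
    (τ : B ⊗[k] A →ₗ[k] A ⊗[k] B) : Prop :=
  τ ∘ₗ TensorProduct.map LinearMap.id unitA
      = TensorProduct.map unitA LinearMap.id ∘ₗ (TensorProduct.comm k B k).toLinearMap
  ∧ τ ∘ₗ TensorProduct.map unitB LinearMap.id
      = TensorProduct.map LinearMap.id unitB ∘ₗ (TensorProduct.comm k k A).toLinearMap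
  ∧ τ ∘ₗ TensorProduct.map mulB mulA
      = TensorProduct.map mulA mulB ∘ₗ midMap k τ ∘ₗ TensorProduct.map τ τ ∘ₗ midMap k τ

/-- The multiplication `(∇_A ⊗ ∇_B) ∘ (1 ⊗ τ ⊗ 1)` of the twisted tensor product. -/
noncomputable def tMul (mulA : A ⊗[k] A →ₗ[k] A) (mulB : B ⊗[k] B →ₗ[k] B)
    (τ : B ⊗[k] A →ₗ[k] A ⊗[k] B) :
    (A ⊗[k] B) ⊗[k] (A ⊗[k] B) →ₗ[k] A ⊗[k] B :=
  TensorProduct.map mulA mulB ∘ₗ midMap k τ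

/-- The unit `(η_A ⊗ η_B) ∘ (k ≅ k ⊗ k)` of the twisted tensor product. -/
noncomputable def tUnit (unitA : k →ₗ[k] A) (unitB : k →ₗ[k] B) : k →ₗ[k] A ⊗[k] B :=
  TensorProduct.map unitA unitB ∘ₗ (TensorProduct.lid k k).symm.toLinearMap

/-- The comultiplication `(1 ⊗ τ⁻¹ ⊗ 1) ∘ (Δ_A ⊗ Δ_B)` of the twisted tensor product. -/
noncomputable def tComul (comulA : A →ₗ[k] A ⊗[k] A) (comulB : B →ₗ[k] B ⊗[k] B)
    (τinv : A ⊗[k] B →ₗ[k] B ⊗[k] A) :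
    A ⊗[k] B →ₗ[k] (A ⊗[k] B) ⊗[k] (A ⊗[k] B) :=
  midMap k τinv ∘ₗ TensorProduct.map comulA comulB

/-- The counit `(k ⊗ k ≅ k) ∘ (ε_A ⊗ ε_B)` of the twisted tensor product. -/
noncomputable def tCounit (counitA : A →ₗ[k] k) (counitB : B →ₗ[k] k) :
    A ⊗[k] B →ₗ[k] k :=
  (TensorProduct.lid k k).toLinearMap ∘ₗ TensorProduct.map counitA counitB

/-- Compatibility of `τ` with the counits (diagram (5) of the paper). -/
def CounitCompat (counitA : A →ₗ[k] k) (counitB : B →ₗ[k] k)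
    (τ : B ⊗[k] A →ₗ[k] A ⊗[k] B) : Prop :=
  TensorProduct.map counitA LinearMap.id ∘ₗ τ
      = (TensorProduct.comm k B k).toLinearMap ∘ₗ TensorProduct.map LinearMap.id counitA
  ∧ TensorProduct.map LinearMap.id counitB ∘ₗ τ
      = (TensorProduct.comm k k A).toLinearMap ∘ₗ TensorProduct.map counitB LinearMap.id

/-- Compatibility of `τ` with the comultiplications (diagram (6) of the paper):
`(Δ_A ⊗ Δ_B)∘τ = (1⊗τ⊗1)∘(τ⊗τ)∘(1⊗τ⊗1)∘(Δ_B ⊗ Δ_A)`. -/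
def ComulCompat (comulA : A →ₗ[k] A ⊗[k] A) (comulB : B →ₗ[k] B ⊗[k] B)
    (τ : B ⊗[k] A →ₗ[k] A ⊗[k] B) : Prop :=
  TensorProduct.map comulA comulB ∘ₗ τ
      = midMap k τ ∘ₗ TensorProduct.map τ τ ∘ₗ midMap k τ ∘ₗ TensorProduct.map comulB comulA

/-- `(f ⊗ 1_B) ∘ τ = (1_A ⊗ τ) ∘ (τ ⊗ 1_A) ∘ (1_B ⊗ f)` for `f : A → A ⊗ A`. -/
def MidACompat (f : A →ₗ[k] A ⊗[k] A) (τ : B ⊗[k] A →ₗ[k] A ⊗[k] B) : Prop :=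
  TensorProduct.map f LinearMap.id ∘ₗ τ
    = (TensorProduct.assoc k A A B).symm.toLinearMap
      ∘ₗ TensorProduct.map LinearMap.id τ
      ∘ₗ (TensorProduct.assoc k A B A).toLinearMap
      ∘ₗ TensorProduct.map τ LinearMap.id
      ∘ₗ (TensorProduct.assoc k B A A).symm.toLinearMap
      ∘ₗ TensorProduct.map LinearMap.id f

/-- `(1_A ⊗ g) ∘ τ = (τ ⊗ 1_B) ∘ (1_B ⊗ τ) ∘ (g ⊗ 1_A)` for `g : B → B ⊗ B`. -/
def MidBCompat (g : B →ₗ[k] B ⊗[k] B) (τ : B ⊗[k] A →ₗ[k] A ⊗[k] B) : Prop :=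
  TensorProduct.map LinearMap.id g ∘ₗ τ
    = (TensorProduct.assoc k A B B).toLinearMap
      ∘ₗ TensorProduct.map τ LinearMap.id
      ∘ₗ (TensorProduct.assoc k B A B).symm.toLinearMap
      ∘ₗ TensorProduct.map LinearMap.id τ
      ∘ₗ (TensorProduct.assoc k B B A).toLinearMap
      ∘ₗ TensorProduct.map g LinearMap.id

/-- `(A, mul, unit, comul, counit)` is a Frobenius algebra (diagrammatically). -/
def IsFrobenius (mul : A ⊗[k] A →ₗ[k] A) (unit : k →ₗ[k] A)
    (comul : A →ₗ[k] A ⊗[k] A) (counit : A →ₗ[k] k) : Prop :=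
  IsUnitalAssoc k mul unit
  ∧ IsCounitalCoassoc k comul counit
  ∧ comul ∘ₗ mul
      = TensorProduct.map LinearMap.id mul ∘ₗ (TensorProduct.assoc k A A A).toLinearMap
          ∘ₗ TensorProduct.map comul LinearMap.id
  ∧ comul ∘ₗ mul
      = TensorProduct.map mul LinearMap.id ∘ₗ (TensorProduct.assoc k A A A).symm.toLinearMap
          ∘ₗ TensorProduct.map LinearMap.id comul

/-- `(A, mul, unit, comul, counit)` is a bialgebra (diagrammatically). -/
def IsBialgebra (mul : A ⊗[k] A →ₗ[k] A) (unit : k →ₗ[k] A)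
    (comul : A →ₗ[k] A ⊗[k] A) (counit : A →ₗ[k] k) : Prop :=
  IsUnitalAssoc k mul unit
  ∧ IsCounitalCoassoc k comul counit
  ∧ counit ∘ₗ mul = (TensorProduct.lid k k).toLinearMap ∘ₗ TensorProduct.map counit counit
  ∧ comul ∘ₗ unit = TensorProduct.map unit unit ∘ₗ (TensorProduct.lid k k).symm.toLinearMap
  ∧ counit ∘ₗ unit = LinearMap.id
  ∧ comul ∘ₗ mul
      = TensorProduct.map mul mul ∘ₗ midMap k (TensorProduct.comm k A A).toLinearMap
          ∘ₗ TensorProduct.map comul comul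

/-- `(A, mul, unit, comul, counit)` is a Hopf algebra: a bialgebra with an antipode. -/
def IsHopf (mul : A ⊗[k] A →ₗ[k] A) (unit : k →ₗ[k] A)
    (comul : A →ₗ[k] A ⊗[k] A) (counit : A →ₗ[k] k) : Prop :=
  IsBialgebra k mul unit comul counit
  ∧ ∃ S : A →ₗ[k] A,
      mul ∘ₗ TensorProduct.map S LinearMap.id ∘ₗ comul = unit ∘ₗ counit
      ∧ mul ∘ₗ TensorProduct.map LinearMap.id S ∘ₗ comul = unit ∘ₗ counit

/-- `Γ` is a right inverse of the multiplication which is a bimodule morphism,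
witnessing separability of the algebra. -/
def IsSeparableWith (mul : A ⊗[k] A →ₗ[k] A) (Γ : A →ₗ[k] A ⊗[k] A) : Prop :=
  mul ∘ₗ Γ = LinearMap.id
  ∧ Γ ∘ₗ mul ∘ₗ TensorProduct.map LinearMap.id mul
      = TensorProduct.map mul mul
          ∘ₗ (TensorProduct.assoc k A A (A ⊗[k] A)).symm.toLinearMap
          ∘ₗ TensorProduct.map LinearMap.id (TensorProduct.assoc k A A A).toLinearMap
          ∘ₗ TensorProduct.map LinearMap.id (TensorProduct.map Γ LinearMap.id)

/-- The pairing `β` is associative: `β∘(1⊗∇) = β∘(∇⊗1)`. -/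
def PairingAssoc (mul : A ⊗[k] A →ₗ[k] A) (β : A ⊗[k] A →ₗ[k] k) : Prop :=
  β ∘ₗ TensorProduct.map LinearMap.id mul ∘ₗ (TensorProduct.assoc k A A A).toLinearMap
    = β ∘ₗ TensorProduct.map mul LinearMap.id

/-- The pairing `β` is non-degenerate with co-pairing `α`:
`(1⊗β)∘(α⊗1) = 1_A` under the canonical isomorphisms. -/
def PairingNondeg (β : A ⊗[k] A →ₗ[k] k) (α : k →ₗ[k] A ⊗[k] A) : Prop :=
  (TensorProduct.rid k A).toLinearMap
      ∘ₗ TensorProduct.map LinearMap.id β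
      ∘ₗ (TensorProduct.assoc k A A A).toLinearMap
      ∘ₗ TensorProduct.map α LinearMap.id
      ∘ₗ (TensorProduct.lid k A).symm.toLinearMap = LinearMap.id

/-- The pairing `β` is symmetric: `β ∘ σ = β` for the flip `σ`. -/
def PairingSymm (β : A ⊗[k] A →ₗ[k] k) : Prop :=
  β ∘ₗ (TensorProduct.comm k A A).toLinearMap = β

end Defs

end TTP

namespace TTP

variable (k : Type*) [Field k]

/-- `f : V → V ⊗ V` is a graded map of degree `d`: it sends the homogeneous
component of degree `x` into the span of the homogeneous components
`V_{x₁} ⊗ V_{x₂}` with `x₁ + x₂ = x + d`. -/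
def ComulGradedOfDegree {V F : Type*} [AddCommGroup V] [Module k V] [AddCommGroup F]
    (𝒱 : F → Submodule k V) (f : V →ₗ[k] V ⊗[k] V) (d : F) : Prop :=
  ∀ x : F, ∀ v ∈ 𝒱 x, f v ∈
    ⨆ (p : F × F) (_ : p.1 + p.2 = x + d),
      LinearMap.range (TensorProduct.map (𝒱 p.1).subtype (𝒱 p.2).subtype)

end TTP

set_option linter.unusedSectionVars false
set_option linter.unusedSimpArgs false

namespace TTP

section Aux

open TensorProduct

theorem midMap_pure {k X P Q Y R S : Type*} [Field k]
    [AddCommGroup X] [Module k X] [AddCommGroup P] [Module k P]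
    [AddCommGroup Q] [Module k Q] [AddCommGroup Y] [Module k Y]
    [AddCommGroup R] [Module k R] [AddCommGroup S] [Module k S]
    {f : P ⊗[k] Q →ₗ[k] R ⊗[k] S} {p : P} {q : Q} {c : k} {r : R} {s : S}
    (h : f (p ⊗ₜ q) = c • (r ⊗ₜ[k] s)) (x : X) (y : Y) :
    midMap k f ((x ⊗ₜ p) ⊗ₜ (q ⊗ₜ y)) = c • ((x ⊗ₜ[k] r) ⊗ₜ[k] (s ⊗ₜ[k] y)) := by
  simp [midMap, h, TensorProduct.tmul_smul, ← TensorProduct.smul_tmul']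

theorem midMap_pure' {k X P Q Y R S : Type*} [Field k]
    [AddCommGroup X] [Module k X] [AddCommGroup P] [Module k P]
    [AddCommGroup Q] [Module k Q] [AddCommGroup Y] [Module k Y]
    [AddCommGroup R] [Module k R] [AddCommGroup S] [Module k S]
    {f : P ⊗[k] Q →ₗ[k] R ⊗[k] S} {p : P} {q : Q} {r : R} {s : S}
    (h : f (p ⊗ₜ q) = (r ⊗ₜ[k] s)) (x : X) (y : Y) :
    midMap k f ((x ⊗ₜ p) ⊗ₜ (q ⊗ₜ y)) = ((x ⊗ₜ[k] r) ⊗ₜ[k] (s ⊗ₜ[k] y)) := by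
  simp [midMap, h]

/-- nonzero homogeneous induction -/
theorem hom_ind {k V F : Type*} [Field k] [AddCommGroup V] [Module k V] [DecidableEq F]
    (𝒱 : F → Submodule k V) [DirectSum.Decomposition 𝒱] {P : V → Prop}
    (h0 : P 0) (hadd : ∀ x y, P x → P y → P (x + y))
    (hp : ∀ f, ∀ x ∈ 𝒱 f, x ≠ 0 → P x) (x : V) : P x := by
  refine DirectSum.Decomposition.inductionOn 𝒱 h0 ?_ hadd x
  intro i m
  by_cases hm : (m : V) = 0
  · rw [hm]; exact h0
  · exact hp i m m.2 hm

theorem comul_ind {k V F : Type*} [Field k] [AddCommGroup V] [Module k V] [AddCommGroup F]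
    {𝒱 : F → Submodule k V} {f : V →ₗ[k] V ⊗[k] V} {d : F}
    (hf : ComulGradedOfDegree k 𝒱 f d) {x : F} {v : V} (hv : v ∈ 𝒱 x)
    {P : V ⊗[k] V → Prop}
    (h0 : P 0) (hadd : ∀ x y, P x → P y → P (x + y))
    (hp : ∀ p q, p + q = x + d → ∀ y ∈ 𝒱 p, ∀ z ∈ 𝒱 q, y ≠ 0 → z ≠ 0 → P (y ⊗ₜ z)) :
    ∀ X, f v = X → P X := by
  rintro _ rfl
  have key := hf x v hv
  refine Submodule.iSup_induction (motive := P) _ key ?_ h0 hadd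
  intro p y hy
  refine Submodule.iSup_induction (motive := P) _ hy ?_ h0 hadd
  rintro hpq _ ⟨z, rfl⟩
  induction z with
  | zero => simpa using h0
  | add a b ha hb => rw [map_add]; exact hadd _ _ ha hb
  | tmul a b =>
    rw [TensorProduct.map_tmul]
    by_cases ha : (a : V) = 0
    · simpa [ha] using h0
    by_cases hb : (b : V) = 0
    · simpa [hb] using h0
    exact hp p.1 p.2 hpq a a.2 b b.2 ha hb

/-- Elementwise data of the twist by a bicharacter. -/
structure Tw {k A B F G : Type*} [Field k]
    [AddCommGroup A] [Module k A] [AddCommGroup B] [Module k B]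
    [AddCommGroup F] [AddCommGroup G]
    (𝒜 : F → Submodule k A) (ℬ : G → Submodule k B)
    (mulA : A ⊗[k] A →ₗ[k] A) (unitA : k →ₗ[k] A)
    (mulB : B ⊗[k] B →ₗ[k] B) (unitB : k →ₗ[k] B)
    (τ : B ⊗[k] A ≃ₗ[k] A ⊗[k] B) (c : F → G → k) : Prop where
  ne : ∀ f g, c f g ≠ 0
  addl : ∀ f f' g, c (f + f') g = c f g * c f' g
  addr : ∀ f g g', c f (g + g') = c f g * c f g'
  tw : ∀ f g, ∀ a ∈ 𝒜 f, ∀ b ∈ ℬ g, τ (b ⊗ₜ[k] a) = c f g • (a ⊗ₜ[k] b)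
  one_r : ∀ b, τ (b ⊗ₜ[k] unitA 1) = unitA 1 ⊗ₜ[k] b
  one_l : ∀ a, τ (unitB 1 ⊗ₜ[k] a) = a ⊗ₜ[k] unitB 1
  mulr : ∀ f f' g, ∀ a ∈ 𝒜 f, ∀ a' ∈ 𝒜 f', ∀ b ∈ ℬ g,
    τ (b ⊗ₜ[k] mulA (a ⊗ₜ a')) = (c f g * c f' g) • (mulA (a ⊗ₜ a') ⊗ₜ[k] b)
  mull : ∀ f g g', ∀ a ∈ 𝒜 f, ∀ b ∈ ℬ g, ∀ b' ∈ ℬ g',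
    τ (mulB (b ⊗ₜ b') ⊗ₜ[k] a) = (c f g * c f g') • (a ⊗ₜ[k] mulB (b ⊗ₜ b'))

theorem symm_of {k V W : Type*} [Field k] [AddCommGroup V] [Module k V]
    [AddCommGroup W] [Module k W] (τ : V ≃ₗ[k] W) {x : V} {y : W} {c : k} (hc : c ≠ 0)
    (h : τ x = c • y) : τ.symm y = c⁻¹ • x := by
  rw [LinearEquiv.symm_apply_eq, map_smul, h, smul_smul, inv_mul_cancel₀ hc, one_smul]

variable {k A B F G : Type*} [Field k]
    [AddCommGroup A] [Module k A] [AddCommGroup B] [Module k B]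
    [AddCommGroup F] [AddCommGroup G] [DecidableEq F] [DecidableEq G]
    {𝒜 : F → Submodule k A} {ℬ : G → Submodule k B}
    [DirectSum.Decomposition 𝒜] [DirectSum.Decomposition ℬ]
    {mulA : A ⊗[k] A →ₗ[k] A} {unitA : k →ₗ[k] A}
    {comulA : A →ₗ[k] A ⊗[k] A} {counitA : A →ₗ[k] k}
    {mulB : B ⊗[k] B →ₗ[k] B} {unitB : k →ₗ[k] B}
    {comulB : B →ₗ[k] B ⊗[k] B} {counitB : B →ₗ[k] k}
    {dA : F} {dB : G} {τ : B ⊗[k] A ≃ₗ[k] A ⊗[k] B} {c : F → G → k}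

theorem Tw.mk' (uA : IsUnitalAssoc k mulA unitA) (uB : IsUnitalAssoc k mulB unitB)
    (ne : ∀ f g, c f g ≠ 0)
    (addl : ∀ f f' g, c (f + f') g = c f g * c f' g)
    (addr : ∀ f g g', c f (g + g') = c f g * c f g')
    (tw : ∀ f g, ∀ a ∈ 𝒜 f, ∀ b ∈ ℬ g, τ (b ⊗ₜ[k] a) = c f g • (a ⊗ₜ[k] b))
    (h : IsTwisting k mulA unitA mulB unitB τ.toLinearMap) :
    Tw 𝒜 ℬ mulA unitA mulB unitB τ c := by
  obtain ⟨h1, h2, h3⟩ := h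
  have one_r : ∀ b, τ (b ⊗ₜ[k] unitA 1) = unitA 1 ⊗ₜ[k] b := fun b => by
    simpa using LinearMap.congr_fun h1 (b ⊗ₜ 1)
  have one_l : ∀ a, τ (unitB 1 ⊗ₜ[k] a) = a ⊗ₜ[k] unitB 1 := fun a => by
    simpa using LinearMap.congr_fun h2 (1 ⊗ₜ a)
  have mA : ∀ a, mulA (unitA 1 ⊗ₜ a) = a := fun a => by
    simpa using LinearMap.congr_fun uA.1 a
  have mB : ∀ a, mulB (a ⊗ₜ unitB 1) = a := fun a => by
    simpa using LinearMap.congr_fun uB.2.1 a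
  refine ⟨ne, addl, addr, tw, one_r, one_l, ?_, ?_⟩
  · intro f f' g a ha a' ha' b hb
    have := LinearMap.congr_fun h3 ((b ⊗ₜ unitB 1) ⊗ₜ (a ⊗ₜ a'))
    simp only [LinearMap.comp_apply, TensorProduct.map_tmul, mB] at this
    rw [midMap_pure' (f := τ.toLinearMap) (one_l a)] at this
    simp only [TensorProduct.map_tmul, LinearEquiv.coe_coe, one_l, tw f g a ha b hb] at this
    rw [← TensorProduct.smul_tmul', map_smul, midMap_pure (f := τ.toLinearMap) (tw f' g a' ha' b hb)] at this
    simpa [mB, smul_smul] using this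
  · intro f g g' a ha b hb b' hb'
    have := LinearMap.congr_fun h3 ((b ⊗ₜ b') ⊗ₜ (unitA 1 ⊗ₜ a))
    simp only [LinearMap.comp_apply, TensorProduct.map_tmul, mA] at this
    rw [midMap_pure' (f := τ.toLinearMap) (one_r b')] at this
    simp only [TensorProduct.map_tmul, LinearEquiv.coe_coe, one_r, tw f g' a ha b' hb'] at this
    rw [TensorProduct.tmul_smul, map_smul, midMap_pure (f := τ.toLinearMap) (tw f g a ha b hb)] at this
    simpa [mA, smul_smul, mul_comm] using this

theorem tMul_pure (T : Tw 𝒜 ℬ mulA unitA mulB unitB τ c) {f g} {a a' : A} {b b' : B}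
    (ha : a' ∈ 𝒜 f) (hb : b ∈ ℬ g) :
    tMul k mulA mulB τ.toLinearMap ((a ⊗ₜ b) ⊗ₜ (a' ⊗ₜ b')) =
      c f g • (mulA (a ⊗ₜ a') ⊗ₜ mulB (b ⊗ₜ b')) := by
  rw [tMul, LinearMap.comp_apply, midMap_pure (f := τ.toLinearMap) (T.tw f g a' ha b hb)]
  simp

theorem symm_mid (T : Tw 𝒜 ℬ mulA unitA mulB unitB τ c) {f g} {x y : A} {u v : B}
    (hy : y ∈ 𝒜 f) (hu : u ∈ ℬ g) :
    midMap k τ.symm.toLinearMap ((x ⊗ₜ y) ⊗ₜ (u ⊗ₜ v)) =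
      (c f g)⁻¹ • ((x ⊗ₜ[k] u) ⊗ₜ[k] (y ⊗ₜ[k] v)) :=
  midMap_pure (f := τ.symm.toLinearMap) (symm_of τ (T.ne f g) (T.tw f g y hy u hu)) _ _

/-- First Frobenius expression versus the comultiplication of a product. -/
theorem frob1 (hA : IsFrobenius k mulA unitA comulA counitA)
    (hB : IsFrobenius k mulB unitB comulB counitB)
    (T : Tw 𝒜 ℬ mulA unitA mulB unitB τ c)
    (hΔA : ComulGradedOfDegree k 𝒜 comulA dA)
    (hΔB : ComulGradedOfDegree k ℬ comulB dB) {f : F} {a' : A} (ha' : a' ∈ 𝒜 f)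
    (a : A) (b b' : B) :
    TensorProduct.map LinearMap.id (tMul k mulA mulB τ.toLinearMap)
      (TensorProduct.assoc k (A ⊗[k] B) (A ⊗[k] B) (A ⊗[k] B)
        (tComul k comulA comulB τ.symm.toLinearMap (a ⊗ₜ b) ⊗ₜ (a' ⊗ₜ b'))) =
    c f dB • tComul k comulA comulB τ.symm.toLinearMap
      (tMul k mulA mulB τ.toLinearMap ((a ⊗ₜ b) ⊗ₜ (a' ⊗ₜ b'))) := by
  induction a using hom_ind 𝒜 with
  | h0 => simp
  | hadd x y hx hy => simp only [add_tmul, map_add, smul_add, hx, hy]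
  | hp p a ha _ =>
  induction b using hom_ind ℬ with
  | h0 => simp
  | hadd x y hx hy => simp only [add_tmul, tmul_add, map_add, smul_add, hx, hy]
  | hp q b hb _ =>
  rw [tMul_pure T ha' hb, map_smul]
  simp only [tComul, LinearMap.comp_apply, map_tmul]
  have eA : comulA (mulA (a ⊗ₜ a')) = TensorProduct.map LinearMap.id mulA
      (TensorProduct.assoc k A A A (comulA a ⊗ₜ a')) := LinearMap.congr_fun hA.2.2.1 (a ⊗ₜ a')
  have eB : comulB (mulB (b ⊗ₜ b')) = TensorProduct.map LinearMap.id mulB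
      (TensorProduct.assoc k B B B (comulB b ⊗ₜ b')) := LinearMap.congr_fun hB.2.2.1 (b ⊗ₜ b')
  rw [eA, eB]
  generalize hX : comulA a = X
  revert hX
  revert X
  refine comul_ind hΔA ha (by simp) (fun x y hx hy => ?_) ?_
  · simp only [add_tmul, tmul_add, map_add, smul_add, hx, hy]
  intro p1 p2 hp x hx y hy _ _
  generalize hY : comulB b = Y
  revert hY
  revert Y
  refine comul_ind hΔB hb (by simp) (fun x y hx hy => ?_) ?_
  · simp only [add_tmul, tmul_add, map_add, smul_add, hx, hy]
  intro q1 q2 hq u hu v hv _ _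
  simp only [assoc_tmul, map_tmul, LinearMap.id_apply]
  rw [symm_mid T hy hu, midMap_pure (f := τ.symm.toLinearMap) (symm_of τ
    (mul_ne_zero (T.ne p2 q1) (T.ne f q1)) (T.mulr p2 f q1 y hy a' ha' u hu)),
    ← smul_tmul', map_smul, map_smul, assoc_tmul, map_tmul, tMul_pure T ha' hv]
  simp only [LinearMap.id_apply, tmul_smul, smul_smul]
  congr 1
  have e : c f q1 * c f q2 = c f q * c f dB := by rw [← T.addr, ← T.addr, hq]
  have := T.ne p2 q1
  have := T.ne f q1
  field_simp
  linear_combination e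

theorem frob2 (hA : IsFrobenius k mulA unitA comulA counitA)
    (hB : IsFrobenius k mulB unitB comulB counitB)
    (T : Tw 𝒜 ℬ mulA unitA mulB unitB τ c)
    (hΔA : ComulGradedOfDegree k 𝒜 comulA dA)
    (hΔB : ComulGradedOfDegree k ℬ comulB dB) {g : G} {b : B} (hb : b ∈ ℬ g)
    (a a' : A) (b' : B) :
    TensorProduct.map (tMul k mulA mulB τ.toLinearMap) LinearMap.id
      ((TensorProduct.assoc k (A ⊗[k] B) (A ⊗[k] B) (A ⊗[k] B)).symm
        ((a ⊗ₜ b) ⊗ₜ tComul k comulA comulB τ.symm.toLinearMap (a' ⊗ₜ b'))) =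
    c dA g • tComul k comulA comulB τ.symm.toLinearMap
      (tMul k mulA mulB τ.toLinearMap ((a ⊗ₜ b) ⊗ₜ (a' ⊗ₜ b'))) := by
  induction a' using hom_ind 𝒜 with
  | h0 => simp
  | hadd x y hx hy => simp only [add_tmul, tmul_add, map_add, smul_add, hx, hy]
  | hp p a' ha' _ =>
  induction b' using hom_ind ℬ with
  | h0 => simp
  | hadd x y hx hy => simp only [add_tmul, tmul_add, map_add, smul_add, hx, hy]
  | hp q b' hb' _ =>
  rw [tMul_pure T ha' hb, map_smul]
  simp only [tComul, LinearMap.comp_apply, map_tmul]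
  have eA : comulA (mulA (a ⊗ₜ a')) = TensorProduct.map mulA LinearMap.id
      ((TensorProduct.assoc k A A A).symm (a ⊗ₜ comulA a')) :=
    LinearMap.congr_fun hA.2.2.2 (a ⊗ₜ a')
  have eB : comulB (mulB (b ⊗ₜ b')) = TensorProduct.map mulB LinearMap.id
      ((TensorProduct.assoc k B B B).symm (b ⊗ₜ comulB b')) :=
    LinearMap.congr_fun hB.2.2.2 (b ⊗ₜ b')
  rw [eA, eB]
  generalize hX : comulA a' = X
  revert hX
  revert X
  refine comul_ind hΔA ha' (by simp) (fun x y hx hy => ?_) ?_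
  · simp only [add_tmul, tmul_add, map_add, smul_add, hx, hy]
  intro p1 p2 hp x hx y hy _ _
  generalize hY : comulB b' = Y
  revert hY
  revert Y
  refine comul_ind hΔB hb' (by simp) (fun x y hx hy => ?_) ?_
  · simp only [add_tmul, tmul_add, map_add, smul_add, hx, hy]
  intro q1 q2 hq u hu v hv _ _
  simp only [assoc_symm_tmul, map_tmul, LinearMap.id_apply]
  rw [symm_mid T hy hu, midMap_pure (f := τ.symm.toLinearMap) (symm_of τ
    (mul_ne_zero (T.ne p2 g) (T.ne p2 q1)) (T.mull p2 g q1 y hy b hb u hu)),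
    tmul_smul, map_smul, map_smul, assoc_symm_tmul, map_tmul, tMul_pure T hx hb]
  simp only [LinearMap.id_apply, ← smul_tmul', smul_smul]
  congr 1
  have e : c p1 g * c p2 g = c p g * c dA g := by rw [← T.addl, ← T.addl, hp]
  have := T.ne p2 q1
  have := T.ne p2 g
  field_simp
  linear_combination e

theorem twist_unitalAssoc (uA : IsUnitalAssoc k mulA unitA) (uB : IsUnitalAssoc k mulB unitB)
    (T : Tw 𝒜 ℬ mulA unitA mulB unitB τ c) :
    IsUnitalAssoc k (tMul k mulA mulB τ.toLinearMap) (tUnit k unitA unitB) := by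
  have mA : ∀ a, mulA (unitA 1 ⊗ₜ a) = a := fun a => by
    simpa using LinearMap.congr_fun uA.1 a
  have mA' : ∀ a, mulA (a ⊗ₜ unitA 1) = a := fun a => by
    simpa using LinearMap.congr_fun uA.2.1 a
  have mB : ∀ a, mulB (unitB 1 ⊗ₜ a) = a := fun a => by
    simpa using LinearMap.congr_fun uB.1 a
  have mB' : ∀ a, mulB (a ⊗ₜ unitB 1) = a := fun a => by
    simpa using LinearMap.congr_fun uB.2.1 a
  have aA : ∀ a b d, mulA (mulA (a ⊗ₜ b) ⊗ₜ d) = mulA (a ⊗ₜ mulA (b ⊗ₜ d)) := fun a b d => by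
    simpa using LinearMap.congr_fun uA.2.2 ((a ⊗ₜ b) ⊗ₜ d)
  have aB : ∀ a b d, mulB (mulB (a ⊗ₜ b) ⊗ₜ d) = mulB (a ⊗ₜ mulB (b ⊗ₜ d)) := fun a b d => by
    simpa using LinearMap.congr_fun uB.2.2 ((a ⊗ₜ b) ⊗ₜ d)
  refine ⟨?_, ?_, ?_⟩
  · refine TensorProduct.ext' fun a b => ?_
    simp only [LinearMap.comp_apply, LinearEquiv.coe_coe, lid_symm_apply, map_tmul, tUnit, tMul,
      LinearMap.id_apply]
    rw [midMap_pure' (f := τ.toLinearMap) (T.one_l a)]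
    simp [mA, mB]
  · refine TensorProduct.ext' fun a b => ?_
    simp only [LinearMap.comp_apply, LinearEquiv.coe_coe, rid_symm_apply, map_tmul, tUnit, tMul,
      LinearMap.id_apply, lid_symm_apply]
    rw [midMap_pure' (f := τ.toLinearMap) (T.one_r b)]
    simp [mA', mB']
  · refine TensorProduct.ext_threefold fun x y z => ?_
    simp only [LinearMap.comp_apply, LinearEquiv.coe_coe, map_tmul, LinearMap.id_apply, assoc_tmul]
    induction x with
    | zero => simp
    | add x y hx hy => simp only [add_tmul, tmul_add, map_add, hx, hy]
    | tmul a b =>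
    induction y with
    | zero => simp
    | add x y hx hy => simp only [add_tmul, tmul_add, map_add, hx, hy]
    | tmul a' b' =>
    induction z with
    | zero => simp
    | add x y hx hy => simp only [add_tmul, tmul_add, map_add, hx, hy]
    | tmul a'' b'' =>
    induction b using hom_ind ℬ with
    | h0 => simp
    | hadd x y hx hy => simp only [add_tmul, tmul_add, map_add, hx, hy]
    | hp g b hb _ =>
    induction b' using hom_ind ℬ with
    | h0 => simp
    | hadd x y hx hy => simp only [add_tmul, tmul_add, map_add, hx, hy]
    | hp g' b' hb' _ =>
    induction a' using hom_ind 𝒜 with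
    | h0 => simp
    | hadd x y hx hy => simp only [add_tmul, tmul_add, map_add, hx, hy]
    | hp f' a' ha' _ =>
    induction a'' using hom_ind 𝒜 with
    | h0 => simp
    | hadd x y hx hy => simp only [add_tmul, tmul_add, map_add, hx, hy]
    | hp f'' a'' ha'' _ =>
    rw [tMul_pure T ha' hb, tMul_pure T ha'' hb', ← smul_tmul', tmul_smul, map_smul, map_smul,
      tMul, LinearMap.comp_apply, LinearMap.comp_apply,
      midMap_pure (f := τ.toLinearMap) (T.mull f'' g g' a'' ha'' b hb b' hb'),
      midMap_pure (f := τ.toLinearMap) (T.mulr f' f'' g a' ha' a'' ha'' b hb)]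
    simp only [map_smul, map_tmul, smul_smul, aA, aB]
    congr 1
    ring

theorem coassoc_of_frob {V : Type*} [AddCommGroup V] [Module k V]
    {mul : V ⊗[k] V →ₗ[k] V} {unit : k →ₗ[k] V} {comul : V →ₗ[k] V ⊗[k] V}
    (hu : ∀ x, mul (x ⊗ₜ unit 1) = x)
    (h1 : comul ∘ₗ mul
      = TensorProduct.map LinearMap.id mul ∘ₗ (TensorProduct.assoc k V V V).toLinearMap
          ∘ₗ TensorProduct.map comul LinearMap.id)
    (h2 : comul ∘ₗ mul
      = TensorProduct.map mul LinearMap.id ∘ₗ (TensorProduct.assoc k V V V).symm.toLinearMap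
          ∘ₗ TensorProduct.map LinearMap.id comul) :
    TensorProduct.map comul LinearMap.id ∘ₗ comul
      = (TensorProduct.assoc k V V V).symm.toLinearMap
          ∘ₗ TensorProduct.map LinearMap.id comul ∘ₗ comul := by
  have e1 : ∀ x y, comul (mul (x ⊗ₜ y)) = TensorProduct.map LinearMap.id mul
      (TensorProduct.assoc k V V V (comul x ⊗ₜ y)) := fun x y => by
    simpa using LinearMap.congr_fun h1 (x ⊗ₜ y)
  let ρ : V ⊗[k] V → V →ₗ[k] V ⊗[k] V := fun E =>
    TensorProduct.map mul LinearMap.id ∘ₗ (TensorProduct.assoc k V V V).symm.toLinearMap ∘ₗ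
      (TensorProduct.mk k V (V ⊗[k] V)).flip E
  have hρ : ρ (comul (unit 1)) = comul := by
    ext x
    have := LinearMap.congr_fun h2 (x ⊗ₜ unit 1)
    simp only [LinearMap.comp_apply, hu] at this
    rw [this]
    simp [ρ]
  have hadd : ∀ E E', ρ (E + E') = ρ E + ρ E' := fun E E' => by
    ext x
    simp [ρ, tmul_add]
  have hzero : ρ 0 = 0 := by
    ext x
    simp [ρ]
  have key : ∀ (E : V ⊗[k] V) (x : V), TensorProduct.map comul LinearMap.id (ρ E x) =
      (TensorProduct.assoc k V V V).symm (TensorProduct.map LinearMap.id (ρ E) (comul x)) := by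
    intro E x
    induction E with
    | zero => simp [hzero]
    | add E E' h h' =>
      simp only [hadd, LinearMap.add_apply, map_add, h, h', TensorProduct.map_add_right]
    | tmul e f =>
      have : ρ (e ⊗ₜ f) x = mul (x ⊗ₜ e) ⊗ₜ f := by simp [ρ]
      rw [this, map_tmul, e1]
      generalize comul x = X
      induction X with
      | zero => simp
      | add E E' h h' => simp only [add_tmul, map_add, ← h, ← h']
      | tmul y z => simp [ρ]
  ext x
  have := key (comul (unit 1)) x
  rw [hρ] at this
  simpa using this

theorem counit_left (hA : IsFrobenius k mulA unitA comulA counitA)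
    (hB : IsFrobenius k mulB unitB comulB counitB)
    (T : Tw 𝒜 ℬ mulA unitA mulB unitB τ c)
    (hΔA : ComulGradedOfDegree k 𝒜 comulA dA)
    (hΔB : ComulGradedOfDegree k ℬ comulB dB)
    (cB : ∀ f, ∀ a ∈ 𝒜 f, a ≠ 0 → c f dB = 1) :
    (TensorProduct.lid k (A ⊗[k] B)).toLinearMap ∘ₗ
      TensorProduct.map (tCounit k counitA counitB) LinearMap.id ∘ₗ
      tComul k comulA comulB τ.symm.toLinearMap = LinearMap.id := by
  refine TensorProduct.ext' fun a b => ?_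
  simp only [tComul, LinearMap.comp_apply, map_tmul, LinearEquiv.coe_coe, LinearMap.id_apply]
  induction a using hom_ind 𝒜 with
  | h0 => simp
  | hadd x y hx hy => simp only [add_tmul, map_add, hx, hy]
  | hp f a ha ha0 =>
  induction b using hom_ind ℬ with
  | h0 => simp
  | hadd x y hx hy => simp only [tmul_add, map_add, hx, hy]
  | hp g b hb _ =>
  have cA' : TensorProduct.lid k A (TensorProduct.map counitA LinearMap.id (comulA a)) = a :=
    LinearMap.congr_fun hA.2.1.1 a
  have cB' : TensorProduct.lid k B (TensorProduct.map counitB LinearMap.id (comulB b)) = b :=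
    LinearMap.congr_fun hB.2.1.1 b
  have step1 : ∀ h, ∀ u ∈ ℬ h, ∀ v : B, TensorProduct.lid k (A ⊗[k] B)
      (TensorProduct.map (tCounit k counitA counitB) LinearMap.id
        (midMap k τ.symm.toLinearMap (comulA a ⊗ₜ (u ⊗ₜ v)))) =
      (c f h)⁻¹ • (a ⊗ₜ (counitB u • v)) := by
    intro h u hu v
    have : (c f h)⁻¹ • (a ⊗ₜ[k] (counitB u • v)) =
        (TensorProduct.map LinearMap.id (counitB.smulRight v))
          (TensorProduct.comm k B A (τ.symm (TensorProduct.lid k A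
            (TensorProduct.map counitA LinearMap.id (comulA a)) ⊗ₜ u))) := by
      rw [cA', symm_of τ (T.ne f h) (T.tw f h a ha u hu)]
      simp
    rw [this]
    clear this cA'
    generalize hX : comulA a = X
    revert hX
    revert X
    refine comul_ind hΔA ha (by simp) (fun x y hx hy => ?_) ?_
    · simp only [add_tmul, tmul_add, map_add, hx, hy]
    intro p1 p2 hp x hx y hy _ _
    rw [symm_mid T hy hu]
    simp only [map_smul, map_tmul, lid_tmul, LinearMap.id_apply, ← smul_tmul']
    rw [symm_of τ (T.ne p2 h) (T.tw p2 h y hy u hu)]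
    simp only [map_smul, map_tmul, comm_tmul, LinearMap.id_apply, LinearMap.smulRight_apply,
      tCounit, LinearMap.comp_apply, LinearEquiv.coe_coe, lid_tmul, tmul_smul, smul_smul,
      smul_eq_mul]
    congr 1
    ring
  have : a ⊗ₜ[k] b = (c f g)⁻¹ • τ (TensorProduct.lid k B
      (TensorProduct.map counitB LinearMap.id (comulB b)) ⊗ₜ a) := by
    rw [cB', T.tw f g a ha b hb, smul_smul, inv_mul_cancel₀ (T.ne f g), one_smul]
  rw [this]
  clear this cB' cA'
  generalize hY : comulB b = Y
  revert hY
  revert Y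
  refine comul_ind hΔB hb (by simp) (fun x y hx hy => ?_) ?_
  · simp only [add_tmul, tmul_add, map_add, smul_add, hx, hy]
  intro q1 q2 hq u hu v hv _ _
  rw [step1 q1 u hu v]
  simp only [map_tmul, lid_tmul, LinearMap.id_apply, ← smul_tmul', map_smul]
  rw [T.tw f q2 a ha v hv]
  simp only [tmul_smul, smul_smul]
  congr 1
  have e : c f q1 * c f q2 = c f g := by
    rw [← T.addr, hq, T.addr, cB f a ha ha0, mul_one]
  have := T.ne f q1
  have := T.ne f q2
  rw [← e]
  field_simp

theorem counit_right (hA : IsFrobenius k mulA unitA comulA counitA)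
    (hB : IsFrobenius k mulB unitB comulB counitB)
    (T : Tw 𝒜 ℬ mulA unitA mulB unitB τ c)
    (hΔA : ComulGradedOfDegree k 𝒜 comulA dA)
    (hΔB : ComulGradedOfDegree k ℬ comulB dB)
    (cA : ∀ g, ∀ b ∈ ℬ g, b ≠ 0 → c dA g = 1) :
    (TensorProduct.rid k (A ⊗[k] B)).toLinearMap ∘ₗ
      TensorProduct.map LinearMap.id (tCounit k counitA counitB) ∘ₗ
      tComul k comulA comulB τ.symm.toLinearMap = LinearMap.id := by
  refine TensorProduct.ext' fun a b => ?_
  simp only [tComul, LinearMap.comp_apply, map_tmul, LinearEquiv.coe_coe, LinearMap.id_apply]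
  induction a using hom_ind 𝒜 with
  | h0 => simp
  | hadd x y hx hy => simp only [add_tmul, map_add, hx, hy]
  | hp f a ha _ =>
  induction b using hom_ind ℬ with
  | h0 => simp
  | hadd x y hx hy => simp only [tmul_add, map_add, hx, hy]
  | hp g b hb hb0 =>
  have cA' : TensorProduct.rid k A (TensorProduct.map LinearMap.id counitA (comulA a)) = a :=
    LinearMap.congr_fun hA.2.1.2.1 a
  have cB' : TensorProduct.rid k B (TensorProduct.map LinearMap.id counitB (comulB b)) = b :=
    LinearMap.congr_fun hB.2.1.2.1 b
  have step1 : ∀ h, ∀ y ∈ 𝒜 h, ∀ x : A, TensorProduct.rid k (A ⊗[k] B)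
      (TensorProduct.map LinearMap.id (tCounit k counitA counitB)
        (midMap k τ.symm.toLinearMap ((x ⊗ₜ y) ⊗ₜ comulB b))) =
      (c h g)⁻¹ • ((counitA y • x) ⊗ₜ b) := by
    intro h y hy x
    have : (c h g)⁻¹ • ((counitA y • x) ⊗ₜ[k] b) =
        (TensorProduct.map (counitA.smulRight x) LinearMap.id)
          (TensorProduct.comm k B A (τ.symm (y ⊗ₜ TensorProduct.rid k B
            (TensorProduct.map LinearMap.id counitB (comulB b))))) := by
      rw [cB', symm_of τ (T.ne h g) (T.tw h g y hy b hb)]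
      simp
    rw [this]
    clear this cB'
    generalize hX : comulB b = X
    revert hX
    revert X
    refine comul_ind hΔB hb (by simp) (fun x y hx hy => ?_) ?_
    · simp only [add_tmul, tmul_add, map_add, hx, hy]
    intro q1 q2 hq u hu v hv _ _
    rw [symm_mid T hy hu]
    simp only [map_smul, map_tmul, rid_tmul, LinearMap.id_apply, tmul_smul]
    rw [symm_of τ (T.ne h q1) (T.tw h q1 y hy u hu)]
    simp only [map_smul, map_tmul, comm_tmul, LinearMap.id_apply, LinearMap.smulRight_apply,
      tCounit, LinearMap.comp_apply, LinearEquiv.coe_coe, lid_tmul, ← smul_tmul', smul_smul,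
      smul_eq_mul]
    congr 1
    ring
  have : a ⊗ₜ[k] b = (c f g)⁻¹ • τ (b ⊗ₜ TensorProduct.rid k A
      (TensorProduct.map LinearMap.id counitA (comulA a))) := by
    rw [cA', T.tw f g a ha b hb, smul_smul, inv_mul_cancel₀ (T.ne f g), one_smul]
  rw [this]
  clear this cB' cA'
  generalize hY : comulA a = Y
  revert hY
  revert Y
  refine comul_ind hΔA ha (by simp) (fun x y hx hy => ?_) ?_
  · simp only [add_tmul, tmul_add, map_add, smul_add, hx, hy]
  intro p1 p2 hp x hx y hy _ _
  rw [step1 p2 y hy x]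
  simp only [map_tmul, rid_tmul, LinearMap.id_apply, tmul_smul, map_smul]
  rw [T.tw p1 g x hx b hb]
  simp only [← smul_tmul', smul_smul]
  congr 1
  have e : c p1 g * c p2 g = c f g := by
    rw [← T.addl, hp, T.addl, cA g b hb hb0, mul_one]
  have := T.ne p1 g
  have := T.ne p2 g
  rw [← e]
  field_simp

theorem twist_frob (hA : IsFrobenius k mulA unitA comulA counitA)
    (hB : IsFrobenius k mulB unitB comulB counitB)
    (T : Tw 𝒜 ℬ mulA unitA mulB unitB τ c)
    (hΔA : ComulGradedOfDegree k 𝒜 comulA dA)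
    (hΔB : ComulGradedOfDegree k ℬ comulB dB)
    (cA : ∀ g, ∀ b ∈ ℬ g, b ≠ 0 → c dA g = 1)
    (cB : ∀ f, ∀ a ∈ 𝒜 f, a ≠ 0 → c f dB = 1) :
    IsFrobenius k (tMul k mulA mulB τ.toLinearMap) (tUnit k unitA unitB)
        (tComul k comulA comulB τ.symm.toLinearMap) (tCounit k counitA counitB) := by
  have U := twist_unitalAssoc hA.1 hB.1 T
  have f1 : tComul k comulA comulB τ.symm.toLinearMap ∘ₗ tMul k mulA mulB τ.toLinearMap
      = TensorProduct.map LinearMap.id (tMul k mulA mulB τ.toLinearMap) ∘ₗ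
        (TensorProduct.assoc k _ _ _).toLinearMap
          ∘ₗ TensorProduct.map (tComul k comulA comulB τ.symm.toLinearMap) LinearMap.id := by
    refine TensorProduct.ext_fourfold' fun a b a' b' => ?_
    simp only [LinearMap.comp_apply, map_tmul, LinearEquiv.coe_coe, LinearMap.id_apply]
    induction a' using hom_ind 𝒜 with
    | h0 => simp
    | hadd x y hx hy => simp only [add_tmul, tmul_add, map_add, hx, hy]
    | hp f a' ha' h0 =>
      rw [frob1 hA hB T hΔA hΔB ha', cB f a' ha' h0, one_smul]
  have f2 : tComul k comulA comulB τ.symm.toLinearMap ∘ₗ tMul k mulA mulB τ.toLinearMap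
      = TensorProduct.map (tMul k mulA mulB τ.toLinearMap) LinearMap.id ∘ₗ
        (TensorProduct.assoc k _ _ _).symm.toLinearMap
          ∘ₗ TensorProduct.map LinearMap.id (tComul k comulA comulB τ.symm.toLinearMap) := by
    refine TensorProduct.ext_fourfold' fun a b a' b' => ?_
    simp only [LinearMap.comp_apply, map_tmul, LinearEquiv.coe_coe, LinearMap.id_apply]
    induction b using hom_ind ℬ with
    | h0 => simp
    | hadd x y hx hy => simp only [add_tmul, tmul_add, map_add, hx, hy]
    | hp g b hb h0 =>
      rw [frob2 hA hB T hΔA hΔB hb, cA g b hb h0, one_smul]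
  refine ⟨U, ⟨counit_left hA hB T hΔA hΔB cB, counit_right hA hB T hΔA hΔB cA,
    coassoc_of_frob (unit := tUnit k unitA unitB) (fun x => ?_) f1 f2⟩, f1, f2⟩
  simpa using LinearMap.congr_fun U.2.1 x

theorem tmul_ne_zero_aux {a : A} {b : B} (ha : a ≠ 0) (hb : b ≠ 0) : a ⊗ₜ[k] b ≠ 0 := by
  obtain ⟨φ, hφ⟩ := Module.Projective.exists_dual_ne_zero k ha
  obtain ⟨ψ, hψ⟩ := Module.Projective.exists_dual_ne_zero k hb
  intro h
  have := congrArg (fun z => TensorProduct.lid k k (TensorProduct.map φ ψ z)) h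
  simp [hφ, hψ] at this

theorem eq_one_aux {V : Type*} [AddCommGroup V] [Module k V] {s : k} {z : V}
    (hz0 : z ≠ 0) (hs : z = s • z) : s = 1 := by
  have : (s - 1) • z = 0 := by rw [sub_smul, one_smul, ← hs, sub_self]
  rcases smul_eq_zero.1 this with h | h
  · exact sub_eq_zero.1 h
  · exact absurd h hz0

theorem forward (hA : IsFrobenius k mulA unitA comulA counitA)
    (hB : IsFrobenius k mulB unitB comulB counitB)
    (T : Tw 𝒜 ℬ mulA unitA mulB unitB τ c)
    (hΔA : ComulGradedOfDegree k 𝒜 comulA dA)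
    (hΔB : ComulGradedOfDegree k ℬ comulB dB)
    (H : IsFrobenius k (tMul k mulA mulB τ.toLinearMap) (tUnit k unitA unitB)
        (tComul k comulA comulB τ.symm.toLinearMap) (tCounit k counitA counitB))
    {f : F} {g : G} {a : A} {b : B} (ha : a ∈ 𝒜 f) (hb : b ∈ ℬ g) (ha0 : a ≠ 0) (hb0 : b ≠ 0) :
    c dA g = 1 ∧ c f dB = 1 := by
  have mA : mulA (unitA 1 ⊗ₜ a) = a := by
    simpa using LinearMap.congr_fun hA.1.1 a
  have mB' : mulB (b ⊗ₜ unitB 1) = b := by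
    simpa using LinearMap.congr_fun hB.1.2.1 b
  have hz : tMul k mulA mulB τ.toLinearMap ((unitA 1 ⊗ₜ b) ⊗ₜ (a ⊗ₜ unitB 1)) ≠ 0 := by
    rw [tMul_pure T ha hb, mA, mB']
    exact smul_ne_zero (T.ne f g) (tmul_ne_zero_aux ha0 hb0)
  have hD : tComul k comulA comulB τ.symm.toLinearMap
      (tMul k mulA mulB τ.toLinearMap ((unitA 1 ⊗ₜ b) ⊗ₜ (a ⊗ₜ unitB 1))) ≠ 0 := by
    intro h0
    apply hz
    have := LinearMap.congr_fun H.2.1.1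
      (tMul k mulA mulB τ.toLinearMap ((unitA 1 ⊗ₜ b) ⊗ₜ (a ⊗ₜ unitB 1)))
    rw [LinearMap.comp_apply, LinearMap.comp_apply, h0] at this
    simpa using this.symm
  have e1 := frob1 hA hB T hΔA hΔB ha (unitA 1) b (unitB 1)
  have e2 := frob2 hA hB T hΔA hΔB hb (unitA 1) a (unitB 1)
  have h1 := LinearMap.congr_fun H.2.2.1 ((unitA 1 ⊗ₜ b) ⊗ₜ (a ⊗ₜ unitB 1))
  have h2 := LinearMap.congr_fun H.2.2.2 ((unitA 1 ⊗ₜ b) ⊗ₜ (a ⊗ₜ unitB 1))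
  simp only [LinearMap.comp_apply, map_tmul, LinearEquiv.coe_coe, LinearMap.id_apply] at h1 h2
  rw [← h1] at e1
  rw [← h2] at e2
  exact ⟨eq_one_aux hD e2, eq_one_aux hD e1⟩

theorem exists_hom {V F : Type*} [AddCommGroup V] [Module k V] [DecidableEq F]
    (𝒱 : F → Submodule k V) [DirectSum.Decomposition 𝒱] [Nontrivial V] :
    ∃ f, ∃ v ∈ 𝒱 f, v ≠ 0 := by
  by_contra hcon
  push Not at hcon
  obtain ⟨v, hv⟩ := exists_ne (0 : V)
  refine hv (hom_ind 𝒱 (P := fun v => v = 0) rfl ?_ ?_ v)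
  · rintro _ _ rfl rfl
    simp
  · exact fun f x hx _ => hcon f x hx

theorem subsingleton_aux (h : Subsingleton A ∨ Subsingleton B) : Subsingleton (A ⊗[k] B) := by
  refine subsingleton_of_forall_eq 0 fun x => ?_
  induction x with
  | zero => rfl
  | add x y hx hy => rw [hx, hy, add_zero]
  | tmul a b =>
    rcases h with h | h
    · rw [Subsingleton.elim a 0, zero_tmul]
    · rw [Subsingleton.elim b 0, tmul_zero]

theorem frob_of_subsingleton {V : Type*} [AddCommGroup V] [Module k V] [Subsingleton V]
    (mul : V ⊗[k] V →ₗ[k] V) (unit : k →ₗ[k] V) (comul : V →ₗ[k] V ⊗[k] V)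
    (counit : V →ₗ[k] k) : IsFrobenius k mul unit comul counit := by
  have h1 : ∀ {W : Type _} [AddCommGroup W] [Module k W] (φ ψ : V →ₗ[k] W), φ = ψ := by
    intro W _ _ φ ψ
    ext x
    rw [Subsingleton.elim x 0, map_zero, map_zero]
  refine ⟨⟨h1 _ _, h1 _ _, ?_⟩, ⟨h1 _ _, h1 _ _, h1 _ _⟩, ?_, ?_⟩
  · exact LinearMap.ext fun _ => Subsingleton.elim _ _
  · exact TensorProduct.ext' fun x y => by
      rw [Subsingleton.elim x 0, zero_tmul, map_zero, map_zero]
  · exact TensorProduct.ext' fun x y => by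
      rw [Subsingleton.elim x 0, zero_tmul, map_zero, map_zero]

end Aux

end TTP

open TTP in
/-- Theorem 6.2 of the paper: the twisted tensor product `A ⊗^t B`
of graded Frobenius algebras along the twist by a bicharacter `t` is a Frobenius
algebra iff `t^{⟨|a| | |b|⟩} = t^{⟨|a|+d_A | |b|⟩}` and
`t^{⟨|a| | |b|⟩} = t^{⟨|a| | |b|+d_B⟩}` for all homogeneous `a ∈ A`, `b ∈ B`. -/
theorem bicharacter_twist_isFrobenius_iff
    {k A B F G : Type*} [Field k]
    [AddCommGroup A] [Module k A] [AddCommGroup B] [Module k B]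
    [AddCommGroup F] [AddCommGroup G] [DecidableEq F] [DecidableEq G]
    (𝒜 : F → Submodule k A) (ℬ : G → Submodule k B)
    [DirectSum.Decomposition 𝒜] [DirectSum.Decomposition ℬ]
    (mulA : A ⊗[k] A →ₗ[k] A) (unitA : k →ₗ[k] A)
    (comulA : A →ₗ[k] A ⊗[k] A) (counitA : A →ₗ[k] k)
    (mulB : B ⊗[k] B →ₗ[k] B) (unitB : k →ₗ[k] B)
    (comulB : B →ₗ[k] B ⊗[k] B) (counitB : B →ₗ[k] k)
    (hA : IsFrobenius k mulA unitA comulA counitA)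
    (hB : IsFrobenius k mulB unitB comulB counitB)
    (dA : F) (dB : G)
    (hΔA : ComulGradedOfDegree k 𝒜 comulA dA)
    (hΔB : ComulGradedOfDegree k ℬ comulB dB)
    (t : (F ⊗[ℤ] G) →+ Additive kˣ)
    (τ : B ⊗[k] A ≃ₗ[k] A ⊗[k] B)
    (hτ : ∀ (f : F) (g : G), ∀ a ∈ 𝒜 f, ∀ b ∈ ℬ g,
      τ (b ⊗ₜ[k] a) = ((Additive.toMul (t (f ⊗ₜ[ℤ] g)) : kˣ) : k) • (a ⊗ₜ[k] b))
    (hτtwist : IsTwisting k mulA unitA mulB unitB τ.toLinearMap) :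
    IsFrobenius k (tMul k mulA mulB τ.toLinearMap) (tUnit k unitA unitB)
        (tComul k comulA comulB τ.symm.toLinearMap) (tCounit k counitA counitB)
      ↔ (∀ (f : F) (g : G), (∃ a ∈ 𝒜 f, a ≠ 0) → (∃ b ∈ ℬ g, b ≠ 0) →
            t (f ⊗ₜ[ℤ] g) = t ((f + dA) ⊗ₜ[ℤ] g))
        ∧ (∀ (f : F) (g : G), (∃ a ∈ 𝒜 f, a ≠ 0) → (∃ b ∈ ℬ g, b ≠ 0) →
            t (f ⊗ₜ[ℤ] g) = t (f ⊗ₜ[ℤ] (g + dB))) := by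
  have T : Tw 𝒜 ℬ mulA unitA mulB unitB τ
      (fun f g => ((Additive.toMul (t (f ⊗ₜ[ℤ] g)) : kˣ) : k)) := by
    refine Tw.mk' hA.1 hB.1 (fun f g => Units.ne_zero _) ?_ ?_ hτ hτtwist
    · intro f f' g
      simp only [TensorProduct.add_tmul, map_add, toMul_add, Units.val_mul]
    · intro f g g'
      simp only [TensorProduct.tmul_add, map_add, toMul_add, Units.val_mul]
  have one_iff : ∀ z : F ⊗[ℤ] G, ((Additive.toMul (t z) : kˣ) : k) = 1 ↔ t z = 0 := by
    intro z
    rw [Units.val_eq_one, toMul_eq_one]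
  have eA : ∀ f g, t (f ⊗ₜ[ℤ] g) = t ((f + dA) ⊗ₜ[ℤ] g) ↔ t (dA ⊗ₜ[ℤ] g) = 0 := by
    intro f g
    rw [TensorProduct.add_tmul, map_add, left_eq_add]
  have eB : ∀ f g, t (f ⊗ₜ[ℤ] g) = t (f ⊗ₜ[ℤ] (g + dB)) ↔ t (f ⊗ₜ[ℤ] dB) = 0 := by
    intro f g
    rw [TensorProduct.tmul_add, map_add, left_eq_add]
  constructor
  · intro H
    constructor
    · rintro f g ⟨a, ha, ha0⟩ ⟨b, hb, hb0⟩
      rw [eA, ← one_iff]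
      exact (forward hA hB T hΔA hΔB H ha hb ha0 hb0).1
    · rintro f g ⟨a, ha, ha0⟩ ⟨b, hb, hb0⟩
      rw [eB, ← one_iff]
      exact (forward hA hB T hΔA hΔB H ha hb ha0 hb0).2
  · rintro ⟨H1, H2⟩
    rcases subsingleton_or_nontrivial A with hs | hs
    · have : Subsingleton (A ⊗[k] B) := subsingleton_aux (Or.inl hs)
      exact frob_of_subsingleton _ _ _ _
    rcases subsingleton_or_nontrivial B with hs' | hs'
    · have : Subsingleton (A ⊗[k] B) := subsingleton_aux (Or.inr hs')
      exact frob_of_subsingleton _ _ _ _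
    obtain ⟨f0, hf0⟩ := exists_hom (k := k) 𝒜
    obtain ⟨g0, hg0⟩ := exists_hom (k := k) ℬ
    refine twist_frob hA hB T hΔA hΔB ?_ ?_
    · intro g b hb hb0
      exact (one_iff _).2 ((eA f0 g).1 (H1 f0 g hf0 ⟨b, hb, hb0⟩))
    · intro f a ha ha0
      exact (one_iff _).2 ((eB f g0).1 (H2 f g0 ⟨a, ha, ha0⟩ hg0))
end

section
/- Let A and B be Frobenius algebras over k graded by abelian groups F and G respectively, with comultiplications Δ_A : A → A⊗A and Δ_B : B → B⊗B graded maps of degree 0, and let t : F⊗_ℤ G → k^× be a group homomorphism. Then the twisted tensor product A⊗^t B, with its induced multiplication, unit, comultiplication and counit, is a Frobenius algebra. -/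
open scoped TensorProduct

namespace TTP

section Helpers

variable {k : Type*} [Field k]

/-- The span of homogeneous pure tensors of total degree `f`. -/
def hSpan {V F : Type*} [AddCommGroup V] [Module k V] [AddCommGroup F]
    (𝒱 : F → Submodule k V) (f : F) : Submodule k (V ⊗[k] V) :=
  Submodule.span k {x | ∃ p q : F, p + q = f ∧ ∃ u ∈ 𝒱 p, ∃ v ∈ 𝒱 q, x = u ⊗ₜ[k] v}

lemma comul_mem_hSpan {V F : Type*} [AddCommGroup V] [Module k V] [AddCommGroup F]
    {𝒱 : F → Submodule k V} {Δ : V →ₗ[k] V ⊗[k] V} (h : ComulGradedOfDegree k 𝒱 Δ 0)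
    {f : F} {v : V} (hv : v ∈ 𝒱 f) : Δ v ∈ hSpan 𝒱 f := by
  have h1 := h f v hv
  refine (iSup₂_le ?_ : _ ≤ hSpan 𝒱 f) h1
  rintro ⟨p, q⟩ hpq
  rintro _ ⟨x, rfl⟩
  induction x with
  | zero => simp
  | add x y hx hy => rw [map_add]; exact add_mem hx hy
  | tmul u v =>
    refine Submodule.subset_span ⟨p, q, by simpa using hpq, u, u.2, v, v.2, by simp⟩

lemma hSpan_ext {V F M : Type*} [AddCommGroup V] [Module k V] [AddCommGroup F]
    [AddCommGroup M] [Module k M]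
    {𝒱 : F → Submodule k V} {f : F} {x : V ⊗[k] V} (hx : x ∈ hSpan 𝒱 f)
    (L R : V ⊗[k] V →ₗ[k] M)
    (h : ∀ p q : F, p + q = f → ∀ u ∈ 𝒱 p, ∀ v ∈ 𝒱 q, L (u ⊗ₜ v) = R (u ⊗ₜ v)) :
    L x = R x := by
  refine LinearMap.eqOn_span (f := L) (g := R) ?_ hx
  rintro _ ⟨p, q, hpq, u, hu, v, hv, rfl⟩
  exact h p q hpq u hu v hv

lemma hSpan_ext₂ {V F W G M : Type*} [AddCommGroup V] [Module k V] [AddCommGroup F]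
    [AddCommGroup W] [Module k W] [AddCommGroup G]
    [AddCommGroup M] [Module k M]
    {𝒱 : F → Submodule k V} {f : F} {x : V ⊗[k] V} (hx : x ∈ hSpan 𝒱 f)
    {𝒲 : G → Submodule k W} {g : G} {y : W ⊗[k] W} (hy : y ∈ hSpan 𝒲 g)
    (L R : (V ⊗[k] V) ⊗[k] (W ⊗[k] W) →ₗ[k] M)
    (h : ∀ p q : F, p + q = f → ∀ u ∈ 𝒱 p, ∀ v ∈ 𝒱 q,
      ∀ p' q' : G, p' + q' = g → ∀ u' ∈ 𝒲 p', ∀ v' ∈ 𝒲 q',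
      L ((u ⊗ₜ v) ⊗ₜ (u' ⊗ₜ v')) = R ((u ⊗ₜ v) ⊗ₜ (u' ⊗ₜ v'))) :
    L (x ⊗ₜ y) = R (x ⊗ₜ y) := by
  refine hSpan_ext hx (L ∘ₗ (TensorProduct.mk k _ _).flip y)
    (R ∘ₗ (TensorProduct.mk k _ _).flip y) ?_
  intro p q hpq u hu v hv
  refine hSpan_ext hy (L ∘ₗ TensorProduct.mk k _ _ (u ⊗ₜ v))
    (R ∘ₗ TensorProduct.mk k _ _ (u ⊗ₜ v)) ?_
  intro p' q' hpq' u' hu' v' hv'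
  exact h p q hpq u hu v hv p' q' hpq' u' hu' v' hv'

lemma hom_ext {V F M : Type*} [AddCommGroup V] [Module k V] [AddCommGroup F] [DecidableEq F]
    [AddCommGroup M] [Module k M]
    (𝒱 : F → Submodule k V) [DirectSum.Decomposition 𝒱] {L R : V →ₗ[k] M}
    (h : ∀ f, ∀ v ∈ 𝒱 f, L v = R v) : L = R := by
  ext v
  refine DirectSum.Decomposition.inductionOn 𝒱 (motive := fun v => L v = R v) ?_ ?_ ?_ v
  · simp
  · intro i m; exact h i m m.2
  · intro m m' h1 h2; simp [h1, h2]

lemma hom_ext₂ {V F W G M : Type*} [AddCommGroup V] [Module k V] [AddCommGroup F]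
    [DecidableEq F] [AddCommGroup W] [Module k W] [AddCommGroup G] [DecidableEq G]
    [AddCommGroup M] [Module k M]
    (𝒱 : F → Submodule k V) [DirectSum.Decomposition 𝒱]
    (𝒲 : G → Submodule k W) [DirectSum.Decomposition 𝒲]
    {L R : V ⊗[k] W →ₗ[k] M}
    (h : ∀ f, ∀ v ∈ 𝒱 f, ∀ g, ∀ w ∈ 𝒲 g, L (v ⊗ₜ w) = R (v ⊗ₜ w)) : L = R := by
  apply TensorProduct.ext
  refine hom_ext 𝒱 fun f v hv => ?_
  refine hom_ext 𝒲 fun g w hw => ?_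
  exact h f v hv g w hw

lemma hom_ext₄ {V F W G M : Type*} [AddCommGroup V] [Module k V] [AddCommGroup F]
    [DecidableEq F] [AddCommGroup W] [Module k W] [AddCommGroup G] [DecidableEq G]
    [AddCommGroup M] [Module k M]
    (𝒱 : F → Submodule k V) [DirectSum.Decomposition 𝒱]
    (𝒲 : G → Submodule k W) [DirectSum.Decomposition 𝒲]
    {L R : (V ⊗[k] W) ⊗[k] (V ⊗[k] W) →ₗ[k] M}
    (h : ∀ f, ∀ v ∈ 𝒱 f, ∀ g, ∀ w ∈ 𝒲 g, ∀ f', ∀ v' ∈ 𝒱 f', ∀ g', ∀ w' ∈ 𝒲 g',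
      L ((v ⊗ₜ w) ⊗ₜ (v' ⊗ₜ w')) = R ((v ⊗ₜ w) ⊗ₜ (v' ⊗ₜ w'))) : L = R := by
  apply TensorProduct.ext
  refine hom_ext₂ 𝒱 𝒲 fun f v hv g w hw => ?_
  refine hom_ext₂ 𝒱 𝒲 fun f' v' hv' g' w' hw' => ?_
  exact h f v hv g w hw f' v' hv' g' w' hw'

lemma hom_ext₆ {V F W G M : Type*} [AddCommGroup V] [Module k V] [AddCommGroup F]
    [DecidableEq F] [AddCommGroup W] [Module k W] [AddCommGroup G] [DecidableEq G]
    [AddCommGroup M] [Module k M]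
    (𝒱 : F → Submodule k V) [DirectSum.Decomposition 𝒱]
    (𝒲 : G → Submodule k W) [DirectSum.Decomposition 𝒲]
    {L R : ((V ⊗[k] W) ⊗[k] (V ⊗[k] W)) ⊗[k] (V ⊗[k] W) →ₗ[k] M}
    (h : ∀ f, ∀ v ∈ 𝒱 f, ∀ g, ∀ w ∈ 𝒲 g, ∀ f', ∀ v' ∈ 𝒱 f', ∀ g', ∀ w' ∈ 𝒲 g',
      ∀ f'', ∀ v'' ∈ 𝒱 f'', ∀ g'', ∀ w'' ∈ 𝒲 g'',
      L (((v ⊗ₜ w) ⊗ₜ (v' ⊗ₜ w')) ⊗ₜ (v'' ⊗ₜ w''))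
        = R (((v ⊗ₜ w) ⊗ₜ (v' ⊗ₜ w')) ⊗ₜ (v'' ⊗ₜ w''))) : L = R := by
  apply TensorProduct.ext
  refine hom_ext₄ 𝒱 𝒲 fun f v hv g w hw f' v' hv' g' w' hw' => ?_
  refine hom_ext₂ 𝒱 𝒲 fun f'' v'' hv'' g'' w'' hw'' => ?_
  exact h f v hv g w hw f' v' hv' g' w' hw' f'' v'' hv'' g'' w'' hw''

/-- The counit of a coalgebra with degree zero comultiplication is concentrated in degree 0. -/
lemma counit_eq_zero {V F : Type*} [AddCommGroup V] [Module k V] [AddCommGroup F]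
    [DecidableEq F] (𝒱 : F → Submodule k V) [DirectSum.Decomposition 𝒱]
    {Δ : V →ₗ[k] V ⊗[k] V} {ε : V →ₗ[k] k} (h : ComulGradedOfDegree k 𝒱 Δ 0)
    (hc : IsCounitalCoassoc k Δ ε) {f : F} (hf : f ≠ 0) {v : V} (hv : v ∈ 𝒱 f) : ε v = 0 := by
  obtain ⟨hl, hr, -⟩ := hc
  have hl' := LinearMap.congr_fun hl v
  have hr' := LinearMap.congr_fun hr v
  simp only [LinearMap.comp_apply, LinearEquiv.coe_coe, LinearMap.id_apply] at hl' hr'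
  let P : F → V →ₗ[k] V := fun i => (𝒱 i).subtype ∘ₗ DirectSum.component k F (fun i => 𝒱 i) i
    ∘ₗ (DirectSum.decomposeLinearEquiv 𝒱).toLinearMap
  have Psame : ∀ i, ∀ w ∈ 𝒱 i, P i w = w := fun i w hw =>
    DirectSum.decompose_of_mem_same 𝒱 hw
  have Pne : ∀ i j, i ≠ j → ∀ w ∈ 𝒱 i, P j w = 0 := fun i j hij w hw =>
    DirectSum.decompose_of_mem_ne 𝒱 hw hij
  have h1 := hSpan_ext (comul_mem_hSpan h hv)
    ((TensorProduct.lid k V).toLinearMap ∘ₗ TensorProduct.map (ε ∘ₗ P 0) LinearMap.id)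
    (P f ∘ₗ (TensorProduct.lid k V).toLinearMap ∘ₗ TensorProduct.map ε LinearMap.id) (by
      intro p q hpq u hu w hw
      simp only [LinearMap.comp_apply, LinearEquiv.coe_coe, LinearMap.id_apply,
        TensorProduct.map_tmul, TensorProduct.lid_tmul, map_smul]
      by_cases hp : p = 0
      · subst hp
        rw [zero_add] at hpq
        subst hpq
        rw [Psame _ _ hu, Psame _ _ hw]
      · rw [Pne p 0 hp u hu, Pne q f (by rintro rfl; simp at hpq; exact hp hpq) w hw]
        simp)
  have h2 := hSpan_ext (comul_mem_hSpan h hv)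
    (ε ∘ₗ (TensorProduct.lid k V).toLinearMap ∘ₗ TensorProduct.map (ε ∘ₗ P 0) LinearMap.id)
    (ε ∘ₗ P 0 ∘ₗ (TensorProduct.rid k V).toLinearMap ∘ₗ TensorProduct.map LinearMap.id ε) (by
      intro p q hpq u hu w hw
      simp [mul_comm])
  simp only [LinearMap.comp_apply, LinearEquiv.coe_coe] at h1 h2
  rw [h1, hl', hr', Psame _ _ hv, Pne _ _ hf _ hv, map_zero] at h2
  exact h2

lemma midMap_of {X P Q Y R S : Type*}
    [AddCommGroup X] [Module k X] [AddCommGroup P] [Module k P]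
    [AddCommGroup Q] [Module k Q] [AddCommGroup Y] [Module k Y]
    [AddCommGroup R] [Module k R] [AddCommGroup S] [Module k S]
    (φ : P ⊗[k] Q →ₗ[k] R ⊗[k] S) {p : P} {q : Q} {c : k} {r : R} {s : S}
    (h : φ (p ⊗ₜ q) = c • (r ⊗ₜ s)) (x : X) (y : Y) :
    midMap k φ ((x ⊗ₜ p) ⊗ₜ (q ⊗ₜ y)) = c • ((x ⊗ₜ r) ⊗ₜ (s ⊗ₜ y)) := by
  simp only [midMap, LinearMap.comp_apply, LinearEquiv.coe_coe, TensorProduct.assoc_symm_tmul,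
    TensorProduct.map_tmul, TensorProduct.assoc_tmul, LinearMap.id_apply, h,
    TensorProduct.tmul_smul, ← TensorProduct.smul_tmul', map_smul]

variable {A B F G : Type*}
    [AddCommGroup A] [Module k A] [AddCommGroup B] [Module k B]
    [AddCommGroup F] [AddCommGroup G] [DecidableEq F] [DecidableEq G]
    (𝒜 : F → Submodule k A) (ℬ : G → Submodule k B)
    [DirectSum.Decomposition 𝒜] [DirectSum.Decomposition ℬ]
    {mulA : A ⊗[k] A →ₗ[k] A} {unitA : k →ₗ[k] A}
    {comulA : A →ₗ[k] A ⊗[k] A} {counitA : A →ₗ[k] k}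
    {mulB : B ⊗[k] B →ₗ[k] B} {unitB : k →ₗ[k] B}
    {comulB : B →ₗ[k] B ⊗[k] B} {counitB : B →ₗ[k] k}

lemma tMul_of (φ : B ⊗[k] A →ₗ[k] A ⊗[k] B) {b : B} {a' : A} {c : k} {r : A} {s : B}
    (h : φ (b ⊗ₜ a') = c • (r ⊗ₜ s)) (a : A) (b' : B) :
    tMul k mulA mulB φ ((a ⊗ₜ b) ⊗ₜ (a' ⊗ₜ b')) = c • (mulA (a ⊗ₜ r) ⊗ₜ mulB (s ⊗ₜ b')) := by
  rw [tMul, LinearMap.comp_apply, midMap_of φ h, map_smul, TensorProduct.map_tmul]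

lemma unit_mul (h : IsUnitalAssoc k mulA unitA) (a : A) : mulA (unitA 1 ⊗ₜ a) = a := by
  simpa using LinearMap.congr_fun h.1 a

lemma mul_unit (h : IsUnitalAssoc k mulA unitA) (a : A) : mulA (a ⊗ₜ unitA 1) = a := by
  simpa using LinearMap.congr_fun h.2.1 a

lemma mul_assoc' (h : IsUnitalAssoc k mulA unitA) (a b c : A) :
    mulA (mulA (a ⊗ₜ b) ⊗ₜ c) = mulA (a ⊗ₜ mulA (b ⊗ₜ c)) := by
  simpa using LinearMap.congr_fun h.2.2 ((a ⊗ₜ b) ⊗ₜ c)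

section Tw
variable {φ : B ⊗[k] A →ₗ[k] A ⊗[k] B} 

lemma tw_unitA (hφ : IsTwisting k mulA unitA mulB unitB φ)
    (b : B) : φ (b ⊗ₜ unitA 1) = unitA 1 ⊗ₜ b := by
  simpa using LinearMap.congr_fun hφ.1 (b ⊗ₜ 1)

lemma tw_unitB (hφ : IsTwisting k mulA unitA mulB unitB φ)
    (a : A) : φ (unitB 1 ⊗ₜ a) = a ⊗ₜ unitB 1 := by
  simpa using LinearMap.congr_fun hφ.2.1 (1 ⊗ₜ a)

lemma tw_mulA (hφ : IsTwisting k mulA unitA mulB unitB φ)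
    (hA : IsUnitalAssoc k mulA unitA) (hB : IsUnitalAssoc k mulB unitB)
    {b : B} {a a' : A} {c c' : k} (h : φ (b ⊗ₜ a) = c • (a ⊗ₜ b))
    (h' : φ (b ⊗ₜ a') = c' • (a' ⊗ₜ b)) :
    φ (b ⊗ₜ mulA (a ⊗ₜ a')) = (c * c') • (mulA (a ⊗ₜ a') ⊗ₜ b) := by
  have := LinearMap.congr_fun hφ.2.2 ((unitB 1 ⊗ₜ b) ⊗ₜ (a ⊗ₜ a'))
  have e : φ (unitB 1 ⊗ₜ a) = (1 : k) • (a ⊗ₜ unitB 1) := by rw [one_smul, tw_unitB hφ]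
  have e' : φ (unitB 1 ⊗ₜ a') = (1 : k) • (a' ⊗ₜ unitB 1) := by rw [one_smul, tw_unitB hφ]
  simpa [midMap_of φ h, midMap_of φ e', e, h', TensorProduct.tmul_smul,
    ← TensorProduct.smul_tmul', unit_mul hB, smul_smul] using this

lemma tw_mulB (hφ : IsTwisting k mulA unitA mulB unitB φ)
    (hA : IsUnitalAssoc k mulA unitA) (hB : IsUnitalAssoc k mulB unitB)
    {b b' : B} {a : A} {c c' : k} (h : φ (b ⊗ₜ a) = c • (a ⊗ₜ b))
    (h' : φ (b' ⊗ₜ a) = c' • (a ⊗ₜ b')) :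
    φ (mulB (b ⊗ₜ b') ⊗ₜ a) = (c * c') • (a ⊗ₜ mulB (b ⊗ₜ b')) := by
  have := LinearMap.congr_fun hφ.2.2 ((b ⊗ₜ b') ⊗ₜ (a ⊗ₜ unitA 1))
  have e : φ (b ⊗ₜ unitA 1) = (1 : k) • (unitA 1 ⊗ₜ b) := by rw [one_smul, tw_unitA hφ]
  have e' : φ (b' ⊗ₜ unitA 1) = (1 : k) • (unitA 1 ⊗ₜ b') := by rw [one_smul, tw_unitA hφ]
  simpa [midMap_of φ h', midMap_of φ e, e', h, TensorProduct.tmul_smul,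
    ← TensorProduct.smul_tmul', mul_unit hA, smul_smul, mul_comm c c'] using this

end Tw

lemma symm_of_s16 {τ : B ⊗[k] A ≃ₗ[k] A ⊗[k] B} {b : B} {a : A} {c : k} (hc : c ≠ 0)
    (h : τ (b ⊗ₜ a) = c • (a ⊗ₜ b)) :
    τ.symm.toLinearMap (a ⊗ₜ b) = c⁻¹ • (b ⊗ₜ a) := by
  rw [LinearEquiv.coe_coe, LinearEquiv.symm_apply_eq, map_smul, h, smul_smul,
    inv_mul_cancel₀ hc, one_smul]

/-- associativity -/
lemma tMul_unitalAssoc (hA : IsUnitalAssoc k mulA unitA) (hB : IsUnitalAssoc k mulB unitB)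
    {s : F → G → k} {φ : B ⊗[k] A →ₗ[k] A ⊗[k] B}
    (hτ : ∀ (f : F) (g : G), ∀ a ∈ 𝒜 f, ∀ b ∈ ℬ g, φ (b ⊗ₜ[k] a) = s f g • (a ⊗ₜ[k] b))
    (hφ : IsTwisting k mulA unitA mulB unitB φ) :
    IsUnitalAssoc k (tMul k mulA mulB φ) (tUnit k unitA unitB) := by
  refine ⟨?_, ?_, ?_⟩
  · refine TensorProduct.ext' fun a b => ?_
    have e : φ (unitB 1 ⊗ₜ a) = (1 : k) • (a ⊗ₜ unitB 1) := by rw [one_smul, tw_unitB hφ]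
    simp [tUnit, tMul_of φ e, unit_mul hA, unit_mul hB]
  · refine TensorProduct.ext' fun a b => ?_
    have e : φ (b ⊗ₜ unitA 1) = (1 : k) • (unitA 1 ⊗ₜ b) := by rw [one_smul, tw_unitA hφ]
    simp [tUnit, tMul_of φ e, mul_unit hA, mul_unit hB]
  · refine hom_ext₆ 𝒜 ℬ fun f a ha g b hb f' a' ha' g' b' hb' f'' a'' ha'' g'' b'' hb'' => ?_
    have e1 := hτ f' g a' ha' b hb
    have e2 := hτ f'' g a'' ha'' b hb
    have e3 := hτ f'' g' a'' ha'' b' hb'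
    simp only [LinearMap.comp_apply, LinearEquiv.coe_coe, LinearMap.id_apply,
      TensorProduct.map_tmul, TensorProduct.assoc_tmul, tMul_of φ e1, tMul_of φ e3,
      TensorProduct.tmul_smul, ← TensorProduct.smul_tmul', map_smul,
      tMul_of φ (tw_mulB hφ hA hB e2 e3), tMul_of φ (tw_mulA hφ hA hB e1 e2), smul_smul,
      mul_assoc' hA, mul_assoc' hB]
    congr 1; ring

lemma tComul_frob (hA : IsFrobenius k mulA unitA comulA counitA)
    (hB : IsFrobenius k mulB unitB comulB counitB)
    (hΔA : ComulGradedOfDegree k 𝒜 comulA 0)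
    (hΔB : ComulGradedOfDegree k ℬ comulB 0)
    {s : F → G → k} (s0 : ∀ f g, s f g ≠ 0)
    (sl : ∀ f f' g, s (f + f') g = s f g * s f' g)
    (sr : ∀ f g g', s f (g + g') = s f g * s f g')
    {τ : B ⊗[k] A ≃ₗ[k] A ⊗[k] B}
    (hτ : ∀ (f : F) (g : G), ∀ a ∈ 𝒜 f, ∀ b ∈ ℬ g, τ (b ⊗ₜ[k] a) = s f g • (a ⊗ₜ[k] b))
    (hφ : IsTwisting k mulA unitA mulB unitB τ.toLinearMap) :
    tComul k comulA comulB τ.symm.toLinearMap ∘ₗ tMul k mulA mulB τ.toLinearMap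
      = TensorProduct.map LinearMap.id (tMul k mulA mulB τ.toLinearMap)
          ∘ₗ (TensorProduct.assoc k _ _ _).toLinearMap
          ∘ₗ TensorProduct.map (tComul k comulA comulB τ.symm.toLinearMap) LinearMap.id := by
  refine hom_ext₄ 𝒜 ℬ fun f a ha g b hb f' a' ha' g' b' hb' => ?_
  have fA := LinearMap.congr_fun hA.2.2.1 (a ⊗ₜ a')
  have fB := LinearMap.congr_fun hB.2.2.1 (b ⊗ₜ b')
  simp only [LinearMap.comp_apply, LinearEquiv.coe_coe, TensorProduct.map_tmul,
    LinearMap.id_apply] at fA fB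
  have key := hSpan_ext₂ (comul_mem_hSpan hΔA ha) (comul_mem_hSpan hΔB hb)
    (s f' g • (midMap k τ.symm.toLinearMap ∘ₗ TensorProduct.map
      (TensorProduct.map LinearMap.id mulA ∘ₗ (TensorProduct.assoc k A A A).toLinearMap
        ∘ₗ (TensorProduct.mk k _ _).flip a')
      (TensorProduct.map LinearMap.id mulB ∘ₗ (TensorProduct.assoc k B B B).toLinearMap
        ∘ₗ (TensorProduct.mk k _ _).flip b')))
    (TensorProduct.map LinearMap.id (tMul k mulA mulB τ.toLinearMap)
          ∘ₗ (TensorProduct.assoc k _ _ _).toLinearMap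
          ∘ₗ (TensorProduct.mk k _ _).flip (a' ⊗ₜ b') ∘ₗ midMap k τ.symm.toLinearMap) (by
      intro p q hpq u hu v hv p' q' hpq' u' hu' v' hv'
      have e1 : τ.toLinearMap _ = _ := hτ q p' v hv u' hu'
      have e2 : τ.toLinearMap _ = _ := hτ f' p' a' ha' u' hu'
      have e3 : τ.toLinearMap _ = _ := hτ f' q' a' ha' v' hv'
      have e4 := tw_mulA hφ hA.1 hB.1 e1 e2
      simp only [LinearMap.smul_apply, LinearMap.comp_apply, TensorProduct.map_tmul,
        LinearMap.flip_apply, TensorProduct.mk_apply, LinearEquiv.coe_toLinearMap,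
        TensorProduct.assoc_tmul,
        LinearMap.id_apply, midMap_of _ (symm_of_s16 (s0 _ _) e1),
        midMap_of _ (symm_of_s16 (mul_ne_zero (s0 _ _) (s0 _ _)) e4),
        ← TensorProduct.smul_tmul', map_smul, tMul_of _ e3, TensorProduct.tmul_smul, smul_smul]
      congr 1
      rw [← hpq', sr]
      have := s0 q p'
      have := s0 f' p'
      field_simp)
  have e1 : τ.toLinearMap _ = _ := hτ f' g a' ha' b hb
  simp only [LinearMap.smul_apply, LinearMap.comp_apply, TensorProduct.map_tmul,
    LinearMap.flip_apply, TensorProduct.mk_apply, LinearEquiv.coe_toLinearMap, tComul,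
    LinearMap.id_apply, tMul_of _ e1, map_smul, fA, fB] at key ⊢
  exact key

lemma tComul_frob' (hA : IsFrobenius k mulA unitA comulA counitA)
    (hB : IsFrobenius k mulB unitB comulB counitB)
    (hΔA : ComulGradedOfDegree k 𝒜 comulA 0)
    (hΔB : ComulGradedOfDegree k ℬ comulB 0)
    {s : F → G → k} (s0 : ∀ f g, s f g ≠ 0)
    (sl : ∀ f f' g, s (f + f') g = s f g * s f' g)
    (sr : ∀ f g g', s f (g + g') = s f g * s f g')
    {τ : B ⊗[k] A ≃ₗ[k] A ⊗[k] B}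
    (hτ : ∀ (f : F) (g : G), ∀ a ∈ 𝒜 f, ∀ b ∈ ℬ g, τ (b ⊗ₜ[k] a) = s f g • (a ⊗ₜ[k] b))
    (hφ : IsTwisting k mulA unitA mulB unitB τ.toLinearMap) :
    tComul k comulA comulB τ.symm.toLinearMap ∘ₗ tMul k mulA mulB τ.toLinearMap
      = TensorProduct.map (tMul k mulA mulB τ.toLinearMap) LinearMap.id
          ∘ₗ (TensorProduct.assoc k _ _ _).symm.toLinearMap
          ∘ₗ TensorProduct.map LinearMap.id (tComul k comulA comulB τ.symm.toLinearMap) := by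
  refine hom_ext₄ 𝒜 ℬ fun f a ha g b hb f' a' ha' g' b' hb' => ?_
  have fA := LinearMap.congr_fun hA.2.2.2 (a ⊗ₜ a')
  have fB := LinearMap.congr_fun hB.2.2.2 (b ⊗ₜ b')
  simp only [LinearMap.comp_apply, LinearEquiv.coe_coe, TensorProduct.map_tmul,
    LinearMap.id_apply] at fA fB
  have key := hSpan_ext₂ (comul_mem_hSpan hΔA ha') (comul_mem_hSpan hΔB hb')
    (s f' g • (midMap k τ.symm.toLinearMap ∘ₗ TensorProduct.map
      (TensorProduct.map mulA LinearMap.id ∘ₗ (TensorProduct.assoc k A A A).symm.toLinearMap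
        ∘ₗ (TensorProduct.mk k _ _) a)
      (TensorProduct.map mulB LinearMap.id ∘ₗ (TensorProduct.assoc k B B B).symm.toLinearMap
        ∘ₗ (TensorProduct.mk k _ _) b)))
    (TensorProduct.map (tMul k mulA mulB τ.toLinearMap) LinearMap.id
          ∘ₗ (TensorProduct.assoc k _ _ _).symm.toLinearMap
          ∘ₗ (TensorProduct.mk k _ _) (a ⊗ₜ b) ∘ₗ midMap k τ.symm.toLinearMap) (by
      intro p q hpq u hu v hv p' q' hpq' u' hu' v' hv'
      have e1 : τ.toLinearMap _ = _ := hτ q p' v hv u' hu'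
      have e2 : τ.toLinearMap _ = _ := hτ q g v hv b hb
      have e3 : τ.toLinearMap _ = _ := hτ p g u hu b hb
      have e4 := tw_mulB hφ hA.1 hB.1 e2 e1
      simp only [LinearMap.smul_apply, LinearMap.comp_apply, TensorProduct.map_tmul,
        TensorProduct.mk_apply, LinearEquiv.coe_toLinearMap,
        TensorProduct.assoc_symm_tmul,
        LinearMap.id_apply, midMap_of _ (symm_of_s16 (s0 _ _) e1),
        midMap_of _ (symm_of_s16 (mul_ne_zero (s0 _ _) (s0 _ _)) e4),
        ← TensorProduct.smul_tmul', map_smul, tMul_of _ e3, TensorProduct.tmul_smul, smul_smul]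
      congr 1
      rw [← hpq, sl]
      have := s0 q p'
      have := s0 q g
      field_simp)
  have e1 : τ.toLinearMap _ = _ := hτ f' g a' ha' b hb
  simp only [LinearMap.smul_apply, LinearMap.comp_apply, TensorProduct.map_tmul,
    TensorProduct.mk_apply, LinearEquiv.coe_toLinearMap, tComul,
    LinearMap.id_apply, tMul_of _ e1, map_smul, fA, fB] at key ⊢
  exact key

/-- Move `a` past `b₁ ⊗ b₂` with `ψ`. -/
noncomputable def passB (ψ : A ⊗[k] B →ₗ[k] B ⊗[k] A) :
    A ⊗[k] (B ⊗[k] B) →ₗ[k] (B ⊗[k] B) ⊗[k] A :=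
  (TensorProduct.assoc k B B A).symm.toLinearMap ∘ₗ TensorProduct.map LinearMap.id ψ
    ∘ₗ (TensorProduct.assoc k B A B).toLinearMap ∘ₗ TensorProduct.map ψ LinearMap.id
    ∘ₗ (TensorProduct.assoc k A B B).symm.toLinearMap

lemma passB_of {ψ : A ⊗[k] B →ₗ[k] B ⊗[k] A} {a : A} {b b' : B} {c c' : k}
    (h : ψ (a ⊗ₜ b) = c • (b ⊗ₜ a)) (h' : ψ (a ⊗ₜ b') = c' • (b' ⊗ₜ a)) :
    passB ψ (a ⊗ₜ (b ⊗ₜ b')) = (c * c') • ((b ⊗ₜ b') ⊗ₜ a) := by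
  simp [passB, h, h', TensorProduct.tmul_smul, ← TensorProduct.smul_tmul', smul_smul]

/-- The shuffle `(A ⊗ A ⊗ A) ⊗ (B ⊗ B ⊗ B) → (A ⊗ B) ⊗ (A ⊗ B) ⊗ (A ⊗ B)`. -/
noncomputable def shuf (ψ : A ⊗[k] B →ₗ[k] B ⊗[k] A) :
    ((A ⊗[k] A) ⊗[k] A) ⊗[k] ((B ⊗[k] B) ⊗[k] B) →ₗ[k]
      ((A ⊗[k] B) ⊗[k] (A ⊗[k] B)) ⊗[k] (A ⊗[k] B) :=
  TensorProduct.map (midMap k ψ) LinearMap.id ∘ₗ midMap k (passB ψ)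

lemma shuf_of {ψ : A ⊗[k] B →ₗ[k] B ⊗[k] A} {a2 a3 : A} {b1 b2 : B} {c c' c'' : k}
    (h : ψ (a2 ⊗ₜ b1) = c • (b1 ⊗ₜ a2)) (h' : ψ (a3 ⊗ₜ b1) = c' • (b1 ⊗ₜ a3))
    (h'' : ψ (a3 ⊗ₜ b2) = c'' • (b2 ⊗ₜ a3)) (a1 : A) (b3 : B) :
    shuf ψ (((a1 ⊗ₜ a2) ⊗ₜ a3) ⊗ₜ ((b1 ⊗ₜ b2) ⊗ₜ b3))
      = (c * c' * c'') • (((a1 ⊗ₜ b1) ⊗ₜ (a2 ⊗ₜ b2)) ⊗ₜ (a3 ⊗ₜ b3)) := by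
  simp only [shuf, LinearMap.comp_apply, midMap_of _ (passB_of h' h''), map_smul,
    TensorProduct.map_tmul, midMap_of _ h, ← TensorProduct.smul_tmul', smul_smul,
    LinearMap.id_apply]
  congr 1; ring

lemma tComul_coassoc (hA : IsCounitalCoassoc k comulA counitA)
    (hB : IsCounitalCoassoc k comulB counitB)
    (hΔA : ComulGradedOfDegree k 𝒜 comulA 0)
    (hΔB : ComulGradedOfDegree k ℬ comulB 0)
    {s : F → G → k}
    (s1 : ∀ f, s f 0 = 1) (s1' : ∀ g, s 0 g = 1)
    (sl : ∀ f f' g, s (f + f') g = s f g * s f' g)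
    (sr : ∀ f g g', s f (g + g') = s f g * s f g')
    {ψ : A ⊗[k] B →ₗ[k] B ⊗[k] A}
    (hψ : ∀ (f : F) (g : G), ∀ a ∈ 𝒜 f, ∀ b ∈ ℬ g, ψ (a ⊗ₜ[k] b) = s f g • (b ⊗ₜ[k] a)) :
    IsCounitalCoassoc k (tComul k comulA comulB ψ) (tCounit k counitA counitB) := by
  refine ⟨?_, ?_, ?_⟩
  · refine hom_ext₂ 𝒜 ℬ fun f a ha g b hb => ?_
    have key := hSpan_ext₂ (comul_mem_hSpan hΔA ha) (comul_mem_hSpan hΔB hb)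
      ((TensorProduct.lid k _).toLinearMap ∘ₗ TensorProduct.map (tCounit k counitA counitB)
        LinearMap.id ∘ₗ midMap k ψ)
      (TensorProduct.map
        ((TensorProduct.lid k A).toLinearMap ∘ₗ TensorProduct.map counitA LinearMap.id)
        ((TensorProduct.lid k B).toLinearMap ∘ₗ TensorProduct.map counitB LinearMap.id)) (by
        intro p q hpq u hu v hv p' q' hpq' u' hu' v' hv'
        have e1 := hψ q p' v hv u' hu'
        by_cases hp : p' = 0
        · subst hp
          simp [midMap_of _ e1, tCounit, s1, TensorProduct.tmul_smul,
            ← TensorProduct.smul_tmul', smul_smul, mul_comm]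
        · simp [midMap_of _ e1, tCounit, counit_eq_zero ℬ hΔB hB hp hu'])
    have cA := LinearMap.congr_fun hA.1 a
    have cB := LinearMap.congr_fun hB.1 b
    simp only [LinearMap.comp_apply, TensorProduct.map_tmul, tComul] at key cA cB ⊢
    rw [key, cA, cB]; rfl
  · refine hom_ext₂ 𝒜 ℬ fun f a ha g b hb => ?_
    have key := hSpan_ext₂ (comul_mem_hSpan hΔA ha) (comul_mem_hSpan hΔB hb)
      ((TensorProduct.rid k _).toLinearMap ∘ₗ TensorProduct.map LinearMap.id
        (tCounit k counitA counitB) ∘ₗ midMap k ψ)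
      (TensorProduct.map
        ((TensorProduct.rid k A).toLinearMap ∘ₗ TensorProduct.map LinearMap.id counitA)
        ((TensorProduct.rid k B).toLinearMap ∘ₗ TensorProduct.map LinearMap.id counitB)) (by
        intro p q hpq u hu v hv p' q' hpq' u' hu' v' hv'
        have e1 := hψ q p' v hv u' hu'
        by_cases hp : q = 0
        · subst hp
          simp [midMap_of _ e1, tCounit, s1', TensorProduct.tmul_smul,
            ← TensorProduct.smul_tmul', smul_smul, mul_comm]
        · simp [midMap_of _ e1, tCounit, counit_eq_zero 𝒜 hΔA hA hp hv])
    have cA := LinearMap.congr_fun hA.2.1 a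
    have cB := LinearMap.congr_fun hB.2.1 b
    simp only [LinearMap.comp_apply, TensorProduct.map_tmul, tComul] at key cA cB ⊢
    rw [key, cA, cB]; rfl
  · apply hom_ext₂ (M := ((A ⊗[k] B) ⊗[k] (A ⊗[k] B)) ⊗[k] (A ⊗[k] B)) 𝒜 ℬ
    intro f a ha g b hb
    have key1 := hSpan_ext₂ (M := ((A ⊗[k] B) ⊗[k] (A ⊗[k] B)) ⊗[k] (A ⊗[k] B))
          (comul_mem_hSpan hΔA ha) (comul_mem_hSpan hΔB hb)
      (TensorProduct.map (tComul k comulA comulB ψ) LinearMap.id ∘ₗ midMap k ψ)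
      (shuf ψ ∘ₗ TensorProduct.map (TensorProduct.map comulA LinearMap.id)
        (TensorProduct.map comulB LinearMap.id)) (by
        intro p q hpq u hu v hv p' q' hpq' u' hu' v' hv'
        have e1 := hψ q p' v hv u' hu'
        have key := hSpan_ext₂ (M := ((A ⊗[k] B) ⊗[k] (A ⊗[k] B)) ⊗[k] (A ⊗[k] B))
          (comul_mem_hSpan hΔA hu) (comul_mem_hSpan hΔB hu')
          (s q p' • ((TensorProduct.mk k ((A ⊗[k] B) ⊗[k] (A ⊗[k] B)) (A ⊗[k] B)).flip (v ⊗ₜ v')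
            ∘ₗ midMap k ψ))
          (shuf ψ ∘ₗ TensorProduct.map ((TensorProduct.mk k _ _).flip v)
            ((TensorProduct.mk k _ _).flip v')) (by
            intro m n hmn x hx y hy m' n' hmn' x' hx' y' hy'
            have e2 := hψ n m' y hy x' hx'
            have e3 := hψ q m' v hv x' hx'
            have e4 := hψ q n' v hv y' hy'
            simp only [LinearMap.smul_apply, LinearMap.comp_apply, TensorProduct.map_tmul,
              LinearMap.flip_apply, TensorProduct.mk_apply, midMap_of _ e2,
              shuf_of e2 e3 e4, ← TensorProduct.smul_tmul', smul_smul]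
            congr 1
            rw [← hmn', sr]; ring)
        simpa [midMap_of _ e1, tComul] using key)
    have key2 := hSpan_ext₂ (M := ((A ⊗[k] B) ⊗[k] (A ⊗[k] B)) ⊗[k] (A ⊗[k] B))
          (comul_mem_hSpan hΔA ha) (comul_mem_hSpan hΔB hb)
      ((TensorProduct.assoc k (A ⊗[k] B) (A ⊗[k] B) (A ⊗[k] B)).symm.toLinearMap ∘ₗ
        TensorProduct.map LinearMap.id (tComul k comulA comulB ψ) ∘ₗ midMap k ψ)
      (shuf ψ ∘ₗ TensorProduct.map
        ((TensorProduct.assoc k A A A).symm.toLinearMap ∘ₗ TensorProduct.map LinearMap.id comulA)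
        ((TensorProduct.assoc k B B B).symm.toLinearMap
          ∘ₗ TensorProduct.map LinearMap.id comulB)) (by
        intro p q hpq u hu v hv p' q' hpq' u' hu' v' hv'
        have e1 := hψ q p' v hv u' hu'
        have key := hSpan_ext₂ (M := ((A ⊗[k] B) ⊗[k] (A ⊗[k] B)) ⊗[k] (A ⊗[k] B))
          (comul_mem_hSpan hΔA hv) (comul_mem_hSpan hΔB hv')
          (s q p' • ((TensorProduct.assoc k (A ⊗[k] B) (A ⊗[k] B) (A ⊗[k] B)).symm.toLinearMap ∘ₗ
            (TensorProduct.mk k _ _) (u ⊗ₜ u') ∘ₗ midMap k ψ))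
          (shuf ψ ∘ₗ TensorProduct.map
            ((TensorProduct.assoc k A A A).symm.toLinearMap ∘ₗ (TensorProduct.mk k _ _) u)
            ((TensorProduct.assoc k B B B).symm.toLinearMap ∘ₗ (TensorProduct.mk k _ _) u')) (by
            intro m n hmn x hx y hy m' n' hmn' x' hx' y' hy'
            have e2 := hψ m p' x hx u' hu'
            have e3 := hψ n p' y hy u' hu'
            have e4 := hψ n m' y hy x' hx'
            simp only [LinearMap.smul_apply, LinearMap.comp_apply, TensorProduct.map_tmul,
              TensorProduct.mk_apply, midMap_of _ e4, LinearEquiv.coe_coe,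
              TensorProduct.assoc_symm_tmul, TensorProduct.tmul_smul, map_smul,
              shuf_of e2 e3 e4, smul_smul]
            congr 1
            rw [← hmn, sl])
        simpa [midMap_of _ e1, tComul] using key)
    have cA := LinearMap.congr_fun hA.2.2 a
    have cB := LinearMap.congr_fun hB.2.2 b
    simp only [LinearMap.comp_apply, TensorProduct.map_tmul] at key1 key2 cA cB ⊢
    have e : tComul k comulA comulB ψ (a ⊗ₜ b) = midMap k ψ (comulA a ⊗ₜ comulB b) := by
      simp [tComul]
    rw [e, key1, key2, cA, cB]

end Helpers

end TTP

open TTP in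
/-- Corollary 6.4 of the paper: the twisted tensor product
`A ⊗^t B` of graded Frobenius algebras whose comultiplications are graded of
degree `0`, along the twist by a bicharacter `t`, is a Frobenius algebra. -/
theorem bicharacter_twist_isFrobenius_of_degree_zero
    {k A B F G : Type*} [Field k]
    [AddCommGroup A] [Module k A] [AddCommGroup B] [Module k B]
    [AddCommGroup F] [AddCommGroup G] [DecidableEq F] [DecidableEq G]
    (𝒜 : F → Submodule k A) (ℬ : G → Submodule k B)
    [DirectSum.Decomposition 𝒜] [DirectSum.Decomposition ℬ]
    (mulA : A ⊗[k] A →ₗ[k] A) (unitA : k →ₗ[k] A)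
    (comulA : A →ₗ[k] A ⊗[k] A) (counitA : A →ₗ[k] k)
    (mulB : B ⊗[k] B →ₗ[k] B) (unitB : k →ₗ[k] B)
    (comulB : B →ₗ[k] B ⊗[k] B) (counitB : B →ₗ[k] k)
    (hA : IsFrobenius k mulA unitA comulA counitA)
    (hB : IsFrobenius k mulB unitB comulB counitB)
    (hΔA : ComulGradedOfDegree k 𝒜 comulA 0)
    (hΔB : ComulGradedOfDegree k ℬ comulB 0)
    (t : (F ⊗[ℤ] G) →+ Additive kˣ)
    (τ : B ⊗[k] A ≃ₗ[k] A ⊗[k] B)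
    (hτ : ∀ (f : F) (g : G), ∀ a ∈ 𝒜 f, ∀ b ∈ ℬ g,
      τ (b ⊗ₜ[k] a) = ((Additive.toMul (t (f ⊗ₜ[ℤ] g)) : kˣ) : k) • (a ⊗ₜ[k] b))
    (hτtwist : IsTwisting k mulA unitA mulB unitB τ.toLinearMap) :
    IsFrobenius k (tMul k mulA mulB τ.toLinearMap) (tUnit k unitA unitB)
        (tComul k comulA comulB τ.symm.toLinearMap) (tCounit k counitA counitB) := by
  let s : F → G → k := fun f g => ((Additive.toMul (t (f ⊗ₜ[ℤ] g)) : kˣ) : k)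
  have s0 : ∀ f g, s f g ≠ 0 := fun f g => Units.ne_zero _
  have sl : ∀ f f' g, s (f + f') g = s f g * s f' g := fun f f' g => by
    simp [s, TensorProduct.add_tmul]
  have sr : ∀ f g g', s f (g + g') = s f g * s f g' := fun f g g' => by
    simp [s, TensorProduct.tmul_add]
  have hψ : ∀ (f : F) (g : G), ∀ a ∈ 𝒜 f, ∀ b ∈ ℬ g,
      τ.symm.toLinearMap (a ⊗ₜ[k] b) = (s f g)⁻¹ • (b ⊗ₜ[k] a) := fun f g a ha b hb =>
    symm_of_s16 (s0 f g) (hτ f g a ha b hb)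
  refine ⟨tMul_unitalAssoc 𝒜 ℬ hA.1 hB.1 (s := s) hτ hτtwist,
    tComul_coassoc 𝒜 ℬ hA.2.1 hB.2.1 hΔA hΔB (s := fun f g => (s f g)⁻¹) ?_ ?_ ?_ ?_ hψ,
    tComul_frob 𝒜 ℬ hA hB hΔA hΔB s0 sl sr hτ hτtwist,
    tComul_frob' 𝒜 ℬ hA hB hΔA hΔB s0 sl sr hτ hτtwist⟩
  · intro f; simp [s]
  · intro g; simp [s]
  · intro f f' g; simp only [sl, mul_inv]
  · intro f g g'; simp only [sr, mul_inv]
end
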